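/- Let A = (A_1,…,A_n) be a nonnegative vector in ℝ^n, D = n + A_1 + ⋯ + A_n, and 1 < p < D. Then for every continuously differentiable function f : ℝ^n → ℝ with compact support satisfying ∫_{ℝ^n_A} |f|^p x^A dx = 1, one has ∫_{ℝ^n_A} |f|^p log(|f|^p) x^A dx ≤ (D/p) · log( C_{p,n,A}^p ∫_{ℝ^n_A} |∇f|^p x^A dx ). -/

import Mathlib

open MeasureTheory Real Filter

noncomputable section

/-- The positivity region `ℝ^n_A = {x : x_i > 0 whenever A_i > 0}`. -/
def monSet {ι : Type*} [Fintype ι] (A : ι → ℝ) : Set (EuclideanSpace ℝ ι) :=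
  {x | ∀ i, 0 < A i → 0 < x i}

/-- The monomial weight `x^A = ∏ |x_i|^{A_i}`. -/
def monWeight {ι : Type*} [Fintype ι] (A : ι → ℝ) (x : EuclideanSpace ℝ ι) : ℝ :=
  ∏ i, |x i| ^ A i

/-- The homogeneous dimension `D = n + A_1 + ⋯ + A_n`. -/
def monDim {ι : Type*} [Fintype ι] (A : ι → ℝ) : ℝ :=
  (Fintype.card ι : ℝ) + ∑ i, A i

/-- `k = #{i : A_i > 0}`. -/
def monK {ι : Type*} [Fintype ι] (A : ι → ℝ) : ℕ :=
  Nat.card {i : ι // 0 < A i}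

/-- `Π(A) = [ (∏ Γ((A_i+1)/2)) / 2^k ]^{2/D}`. -/
def monPi {ι : Type*} [Fintype ι] (A : ι → ℝ) : ℝ :=
  ((∏ i, Gamma ((A i + 1) / 2)) / 2 ^ monK A) ^ (2 / monDim A)

/-- `C_{1,n,A}`, the sharp constant for `p = 1`. -/
def monC1 {ι : Type*} [Fintype ι] (A : ι → ℝ) : ℝ :=
  (monDim A)⁻¹ *
    ((2 ^ monK A * Gamma (1 + monDim A / 2)) / ∏ i, Gamma ((A i + 1) / 2)) ^ (1 / monDim A)

/-- `C_{p,n,A}` for `1 < p < D`. -/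
def monCp {ι : Type*} [Fintype ι] (A : ι → ℝ) (p : ℝ) : ℝ :=
  monC1 A * monDim A ^ (1 - 1 / p - 1 / monDim A) *
    ((p - 1) / (monDim A - p)) ^ (1 / (p / (p - 1))) *
    (p / (p - 1) * Gamma (monDim A) /
      (Gamma (monDim A / p) * Gamma (monDim A / (p / (p - 1))))) ^ (1 / monDim A)

section

open scoped ENNReal Pointwise

theorem volume_add_le_of_isCompact {K L : Set ℝ} (hK : IsCompact K) (hL : IsCompact L)
    (hK0 : K.Nonempty) (hL0 : L.Nonempty) : volume K + volume L ≤ volume (K + L) := by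
  have ha := hK.sSup_mem hK0
  have hb := hL.sInf_mem hL0
  set a := sSup K
  set b := sInf L
  have h1 : volume ((fun x => b + x) '' K) = volume K := by simp
  have h2 : volume ((fun x => a + x) '' L) = volume L := by simp
  have hd : AEDisjoint volume ((fun x => b + x) '' K) ((fun x => a + x) '' L) := by
    refine measure_mono_null (t := {a + b}) ?_ (by simp)
    rintro _ ⟨⟨x, hx, rfl⟩, y, hy, hxy⟩
    have hxa : x ≤ a := le_csSup hK.bddAbove hx
    have hyb : b ≤ y := csInf_le hL.bddBelow hy
    simp only at hxy ⊢
    rw [Set.mem_singleton_iff]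
    linarith
  have hm : MeasurableSet ((fun x => a + x) '' L) :=
    (hL.image (by fun_prop)).measurableSet
  rw [← h1, ← h2, ← measure_union₀ hm.nullMeasurableSet hd]
  refine measure_mono (Set.union_subset ?_ ?_)
  · rintro _ ⟨x, hx, rfl⟩
    exact ⟨x, hx, b, hb, add_comm _ _⟩
  · rintro _ ⟨y, hy, rfl⟩
    exact ⟨a, ha, y, hy, rfl⟩

theorem volume_add_le_of_add_subset {A B C : Set ℝ} (hA : MeasurableSet A) (hB : MeasurableSet B)
    (hA0 : A.Nonempty) (hB0 : B.Nonempty) (h : A + B ⊆ C) :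
    volume A + volume B ≤ volume C := by
  obtain ⟨a, ha⟩ := hA0
  obtain ⟨b, hb⟩ := hB0
  refine le_of_forall_lt fun r hr => ?_
  rw [hA.measure_eq_iSup_isCompact, hB.measure_eq_iSup_isCompact] at hr
  refine hr.trans_le ?_
  simp only [iSup_and'] at hr ⊢
  refine ENNReal.biSup_add_biSup_le' ⟨∅, by simp⟩ ⟨∅, by simp⟩ ?_
  rintro K ⟨hKA, hK⟩ L ⟨hLB, hL⟩
  calc volume K + volume L ≤ volume (insert a K) + volume (insert b L) := by
        gcongr <;> exact Set.subset_insert _ _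
    _ ≤ volume (insert a K + insert b L) :=
        volume_add_le_of_isCompact (hK.insert a) (hL.insert b) (by simp) (by simp)
    _ ≤ volume C := by
        refine measure_mono (subset_trans (Set.add_subset_add ?_ ?_) h)
        · exact Set.insert_subset ha hKA
        · exact Set.insert_subset hb hLB

/-- The one-dimensional Brunn–Minkowski inequality in linear form. -/
theorem brunn_minkowski_real {A B C : Set ℝ} (hA : MeasurableSet A) (hB : MeasurableSet B)
    (hA0 : A.Nonempty) (hB0 : B.Nonempty) {t : ℝ} (ht0 : 0 < t) (ht1 : t < 1)
    (h : ∀ x ∈ A, ∀ y ∈ B, (1 - t) * x + t * y ∈ C) :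
    ENNReal.ofReal (1 - t) * volume A + ENNReal.ofReal t * volume B ≤ volume C := by
  have ht1' : 0 < 1 - t := by linarith
  have e1 : volume ((1 - t) • A) = ENNReal.ofReal (1 - t) * volume A := by
    rw [Measure.addHaar_smul]; simp [abs_of_pos ht1']
  have e2 : volume (t • B) = ENNReal.ofReal t * volume B := by
    rw [Measure.addHaar_smul]; simp [abs_of_pos ht0]
  rw [← e1, ← e2]
  refine volume_add_le_of_add_subset (hA.const_smul₀ _) (hB.const_smul₀ _)
    (hA0.smul_set) (hB0.smul_set) ?_
  rintro _ ⟨_, ⟨x, hx, rfl⟩, _, ⟨y, hy, rfl⟩, rfl⟩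
  exact h x hx y hy

theorem ennreal_geom_mean_le_arith_mean {t : ℝ} (ht0 : 0 < t) (ht1 : t < 1) (a b : ℝ≥0∞) :
    a ^ (1 - t) * b ^ t ≤ ENNReal.ofReal (1 - t) * a + ENNReal.ofReal t * b := by
  have ht1' : 0 < 1 - t := by linarith
  by_cases ha : a = ∞
  · subst ha
    rw [ENNReal.mul_top (by simpa using ht1), top_add]; exact le_top
  by_cases hb : b = ∞
  · subst hb
    rw [ENNReal.mul_top (by simpa using ht0), add_top]; exact le_top
  lift a to NNReal using ha
  lift b to NNReal using hb
  have := NNReal.geom_mean_le_arith_mean2_weighted (1 - t).toNNReal t.toNNReal a b (by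
    rw [← Real.toNNReal_add ht1'.le ht0.le]; simp)
  rw [Real.coe_toNNReal _ ht1'.le, Real.coe_toNNReal _ ht0.le] at this
  rw [← ENNReal.coe_rpow_of_nonneg _ ht1'.le, ← ENNReal.coe_rpow_of_nonneg _ ht0.le]
  unfold ENNReal.ofReal
  exact_mod_cast this

/-- Layer-cake formula on the unit interval for a function with values in `[0, 1]`. -/
theorem lintegral_eq_lintegral_meas_lt_unit {f : ℝ → ℝ} (hf : Measurable f) (h0 : ∀ x, 0 ≤ f x)
    (h1 : ∀ x, f x ≤ 1) :
    ∫⁻ x, ENNReal.ofReal (f x) = ∫⁻ s in Set.Ioo (0 : ℝ) 1, volume {x | s < f x} := by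
  rw [lintegral_eq_lintegral_meas_lt _ (Eventually.of_forall h0) hf.aemeasurable]
  rw [← Set.Ioo_union_Ici_eq_Ioi (zero_lt_one (α := ℝ)),
    lintegral_union measurableSet_Ici (by
      rw [Set.disjoint_left]; intro x hx hx'; exact absurd hx.2 (not_lt.mpr hx'))]
  have : ∫⁻ s in Set.Ici (1 : ℝ), volume {x | s < f x} = 0 := by
    rw [setLIntegral_congr_fun (g := fun _ => 0) measurableSet_Ici]
    · simp
    · intro s hs
      have : {x | s < f x} = ∅ := by
        ext x; simpa using (h1 x).trans hs
      simp [this]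
  rw [this, add_zero]

theorem prekopa_leindler_real_normalized {f g h : ℝ → ℝ} (hf : Measurable f) (hg : Measurable g)
    (hh : Measurable h) (hf0 : ∀ x, 0 ≤ f x) (hg0 : ∀ x, 0 ≤ g x) (hh0 : ∀ x, 0 ≤ h x)
    (hf1 : ∀ x, f x ≤ 1) (hg1 : ∀ x, g x ≤ 1)
    (hfs : ∀ s < 1, ∃ x, s < f x) (hgs : ∀ s < 1, ∃ x, s < g x)
    {t : ℝ} (ht0 : 0 < t) (ht1 : t < 1)
    (H : ∀ x y, f x ^ (1 - t) * g y ^ t ≤ h ((1 - t) * x + t * y)) :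
    ENNReal.ofReal (1 - t) * (∫⁻ x, ENNReal.ofReal (f x)) +
      ENNReal.ofReal t * (∫⁻ x, ENNReal.ofReal (g x)) ≤ ∫⁻ x, ENNReal.ofReal (h x) := by
  have ht1' : 0 < 1 - t := by linarith
  have hanti (u : ℝ → ℝ) : Measurable fun s : ℝ => volume {x | s < u x} :=
    Antitone.measurable fun s s' hs => measure_mono fun x hx => lt_of_le_of_lt hs hx
  rw [lintegral_eq_lintegral_meas_lt_unit hf hf0 hf1, lintegral_eq_lintegral_meas_lt_unit hg hg0 hg1,
    lintegral_eq_lintegral_meas_lt _ (Eventually.of_forall hh0) hh.aemeasurable,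
    ← lintegral_const_mul _ (hanti f), ← lintegral_const_mul _ (hanti g),
    ← lintegral_add_left ((hanti f).const_mul _)]
  refine (setLIntegral_mono' measurableSet_Ioo fun s hs => ?_).trans
    (lintegral_mono_set Set.Ioo_subset_Ioi_self)
  refine brunn_minkowski_real (measurableSet_lt measurable_const hf)
    (measurableSet_lt measurable_const hg) (hfs s hs.2) (hgs s hs.2) ht0 ht1 ?_
  intro x hx y hy
  refine lt_of_lt_of_le ?_ (H x y)
  simp only [Set.mem_ofPred_eq] at hx hy
  calc s = s ^ (1 - t) * s ^ t := by rw [← Real.rpow_add hs.1]; simp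
    _ < f x ^ (1 - t) * g y ^ t := by
      refine mul_lt_mul'' (Real.rpow_lt_rpow hs.1.le hx ht1') (Real.rpow_lt_rpow hs.1.le hy ht0) ?_ ?_
        <;> exact Real.rpow_nonneg hs.1.le _

theorem prekopa_leindler_real_of_bounded {f g h : ℝ → ℝ≥0∞} (hf : Measurable f) (hg : Measurable g)
    (hh : Measurable h) {M : ℝ≥0∞} (hM : M ≠ ∞) (hfM : ∀ x, f x ≤ M) (hgM : ∀ x, g x ≤ M)
    {t : ℝ} (ht0 : 0 < t) (ht1 : t < 1)
    (H : ∀ x y, f x ^ (1 - t) * g y ^ t ≤ h ((1 - t) * x + t * y)) :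
    (∫⁻ x, f x) ^ (1 - t) * (∫⁻ x, g x) ^ t ≤ ∫⁻ x, h x := by
  have ht1' : 0 < 1 - t := by linarith
  set a := ⨆ x, f x with ha
  set b := ⨆ x, g x with hb
  have haM : a ≤ M := iSup_le hfM
  have hbM : b ≤ M := iSup_le hgM
  have haT : a ≠ ∞ := ne_top_of_le_ne_top hM haM
  have hbT : b ≠ ∞ := ne_top_of_le_ne_top hM hbM
  have hfa : ∀ x, f x ≤ a := le_iSup f
  have hgb : ∀ x, g x ≤ b := le_iSup g
  by_cases ha0 : a = 0
  · have : ∫⁻ x, f x = 0 := by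
      have : f = fun _ => 0 := by ext x; simpa [ha0] using hfa x
      simp [this]
    rw [this, ENNReal.zero_rpow_of_pos ht1', zero_mul]; exact zero_le
  by_cases hb0 : b = 0
  · have : ∫⁻ x, g x = 0 := by
      have : g = fun _ => 0 := by ext x; simpa [hb0] using hgb x
      simp [this]
    rw [this, ENNReal.zero_rpow_of_pos ht0, mul_zero]; exact zero_le
  set c := a ^ (1 - t) * b ^ t with hc
  have hc0 : c ≠ 0 := by
    refine mul_ne_zero ?_ ?_
    · simp [ENNReal.rpow_eq_zero_iff, ha0, haT]
    · simp [ENNReal.rpow_eq_zero_iff, hb0, hbT]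
  have hcT : c ≠ ∞ := ENNReal.mul_ne_top (ENNReal.rpow_ne_top_of_nonneg ht1'.le haT)
    (ENNReal.rpow_ne_top_of_nonneg ht0.le hbT)
  have hfT : ∀ x, f x / a ≤ 1 := fun x => ENNReal.div_le_of_le_mul (by simpa using hfa x)
  have hgT : ∀ x, g x / b ≤ 1 := fun x => ENNReal.div_le_of_le_mul (by simpa using hgb x)
  have hfN : ∀ x, f x / a ≠ ∞ := fun x => ne_top_of_le_ne_top ENNReal.one_ne_top (hfT x)
  have hgN : ∀ x, g x / b ≠ ∞ := fun x => ne_top_of_le_ne_top ENNReal.one_ne_top (hgT x)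
  have hmN : ∀ x, min (h x / c) 1 ≠ ∞ := fun x => ne_top_of_le_ne_top ENNReal.one_ne_top
    (min_le_right _ _)
  have hsup {u : ℝ → ℝ≥0∞} {m : ℝ≥0∞} (hm : m = ⨆ x, u x) (hm0 : m ≠ 0) (hmT : m ≠ ∞)
      (hu : ∀ x, u x / m ≠ ∞) (s : ℝ) (hs : s < 1) : ∃ x, s < (u x / m).toReal := by
    have : ENNReal.ofReal s * m < ⨆ x, u x := by
      rw [← hm]
      calc ENNReal.ofReal s * m < 1 * m := by
            rw [ENNReal.mul_lt_mul_iff_left hm0 hmT]; simpa using hs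
        _ = m := one_mul m
    obtain ⟨x, hx⟩ := lt_iSup_iff.mp this
    refine ⟨x, ?_⟩
    have h2 : ENNReal.ofReal s < u x / m := by
      rwa [ENNReal.lt_div_iff_mul_lt (Or.inl hm0) (Or.inl hmT)]
    by_cases hs0 : 0 ≤ s
    · exact (ENNReal.ofReal_lt_iff_lt_toReal hs0 (hu x)).mp h2
    · rw [not_le] at hs0
      exact hs0.trans_le ENNReal.toReal_nonneg
  have key := prekopa_leindler_real_normalized (f := fun x => (f x / a).toReal)
    (g := fun x => (g x / b).toReal) (h := fun x => (min (h x / c) 1).toReal)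
    (by fun_prop) (by fun_prop) (by fun_prop) (fun _ => ENNReal.toReal_nonneg)
    (fun _ => ENNReal.toReal_nonneg) (fun _ => ENNReal.toReal_nonneg)
    (fun x => ENNReal.toReal_le_of_le_ofReal zero_le_one (by simpa using hfT x))
    (fun x => ENNReal.toReal_le_of_le_ofReal zero_le_one (by simpa using hgT x))
    (hsup ha ha0 haT hfN) (hsup hb hb0 hbT hgN) ht0 ht1 (by
      intro x y
      rw [ENNReal.toReal_rpow, ENNReal.toReal_rpow, ← ENNReal.toReal_mul]
      refine ENNReal.toReal_mono (hmN _) (le_min ?_ ?_)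
      · rw [ENNReal.div_rpow_of_nonneg _ _ ht1'.le, ENNReal.div_rpow_of_nonneg _ _ ht0.le]
        refine ENNReal.le_div_iff_mul_le (Or.inl hc0) (Or.inl hcT) |>.mpr ?_
        refine le_trans (le_of_eq ?_) (H x y)
        have e1 : f x ^ (1 - t) / a ^ (1 - t) * a ^ (1 - t) = f x ^ (1 - t) :=
          ENNReal.div_mul_cancel (by simp [ENNReal.rpow_eq_zero_iff, ha0, haT])
            (ENNReal.rpow_ne_top_of_nonneg ht1'.le haT)
        have e2 : g y ^ t / b ^ t * b ^ t = g y ^ t :=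
          ENNReal.div_mul_cancel (by simp [ENNReal.rpow_eq_zero_iff, hb0, hbT])
            (ENNReal.rpow_ne_top_of_nonneg ht0.le hbT)
        rw [hc, mul_mul_mul_comm, e1, e2]
      · refine mul_le_one' ?_ ?_
        · exact ENNReal.rpow_le_one (hfT x) ht1'.le
        · exact ENNReal.rpow_le_one (hgT y) ht0.le)
  simp only [ENNReal.ofReal_toReal (hfN _), ENNReal.ofReal_toReal (hgN _),
    ENNReal.ofReal_toReal (hmN _)] at key
  have key2 := (ennreal_geom_mean_le_arith_mean ht0 ht1 _ _).trans key
  have key3 : (∫⁻ x, f x / a) ^ (1 - t) * (∫⁻ x, g x / b) ^ t ≤ ∫⁻ x, h x / c :=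
    key2.trans (lintegral_mono fun x => min_le_left _ _)
  simp only [div_eq_mul_inv] at key3
  rw [lintegral_mul_const _ hf, lintegral_mul_const _ hg, lintegral_mul_const _ hh] at key3
  simp only [← div_eq_mul_inv] at key3
  rw [ENNReal.le_div_iff_mul_le (Or.inl hc0) (Or.inl hcT), ENNReal.div_rpow_of_nonneg _ _ ht1'.le,
    ENNReal.div_rpow_of_nonneg _ _ ht0.le, hc, mul_mul_mul_comm,
    ENNReal.div_mul_cancel (by simp [ENNReal.rpow_eq_zero_iff, ha0, haT])
            (ENNReal.rpow_ne_top_of_nonneg ht1'.le haT),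
    ENNReal.div_mul_cancel (by simp [ENNReal.rpow_eq_zero_iff, hb0, hbT])
            (ENNReal.rpow_ne_top_of_nonneg ht0.le hbT)] at key3
  exact key3

/-- The Prékopa–Leindler inequality on the real line. -/
theorem prekopa_leindler_real {f g h : ℝ → ℝ≥0∞} (hf : Measurable f) (hg : Measurable g)
    (hh : Measurable h) {t : ℝ} (ht0 : 0 < t) (ht1 : t < 1)
    (H : ∀ x y, f x ^ (1 - t) * g y ^ t ≤ h ((1 - t) * x + t * y)) :
    (∫⁻ x, f x) ^ (1 - t) * (∫⁻ x, g x) ^ t ≤ ∫⁻ x, h x := by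
  have ht1' : 0 < 1 - t := by linarith
  have hsup {u : ℝ → ℝ≥0∞} (hu : Measurable u) :
      ∫⁻ x, u x = ⨆ N : ℕ, ∫⁻ x, min (u x) N := by
    rw [← lintegral_iSup (fun N => hu.min measurable_const)]
    · congr 1; ext x
      rw [← inf_iSup_eq, ENNReal.iSup_natCast, inf_top_eq]
    · intro N M hNM x
      exact min_le_min_left _ (by exact_mod_cast hNM)
  have hmono (u : ℝ → ℝ≥0∞) : Monotone fun N : ℕ => ∫⁻ x, min (u x) N := fun N M hNM =>
    lintegral_mono fun x => min_le_min_left _ (by exact_mod_cast hNM)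
  have lim {u : ℝ → ℝ≥0∞} (hu : Measurable u) :
      Tendsto (fun N : ℕ => ∫⁻ x, min (u x) N) atTop (nhds (∫⁻ x, u x)) := by
    rw [hsup hu]; exact tendsto_atTop_iSup (hmono u)
  by_cases hf0 : ∫⁻ x, f x = 0
  · rw [hf0, ENNReal.zero_rpow_of_pos ht1', zero_mul]; exact zero_le
  by_cases hg0 : ∫⁻ x, g x = 0
  · rw [hg0, ENNReal.zero_rpow_of_pos ht0, mul_zero]; exact zero_le
  have L := ENNReal.Tendsto.mul (a := (∫⁻ x, f x) ^ (1 - t)) (b := (∫⁻ x, g x) ^ t)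
    ((ENNReal.continuous_rpow_const.tendsto _).comp (lim hf))
    (Or.inl (by simp [ENNReal.rpow_eq_zero_iff, hf0]; intro _; exact ht1.le))
    ((ENNReal.continuous_rpow_const.tendsto _).comp (lim hg))
    (Or.inl (by simp [ENNReal.rpow_eq_zero_iff, hg0]; intro _; exact ht0.le))
  refine le_of_tendsto L (Eventually.of_forall fun N => ?_)
  refine prekopa_leindler_real_of_bounded (hf.min measurable_const) (hg.min measurable_const) hh
    (M := N) (by simp) (fun x => min_le_right _ _) (fun x => min_le_right _ _) ht0 ht1 ?_
  intro x y
  refine le_trans ?_ (H x y)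
  gcongr <;> exact min_le_left _ _

/-- The Prékopa–Leindler inequality on `Fin n → ℝ`. -/
theorem prekopa_leindler_pi {t : ℝ} (ht0 : 0 < t) (ht1 : t < 1) {n : ℕ} :
    ∀ {f g h : (Fin n → ℝ) → ℝ≥0∞}, Measurable f → Measurable g → Measurable h →
    (∀ x y, f x ^ (1 - t) * g y ^ t ≤ h ((1 - t) • x + t • y)) →
    (∫⁻ x, f x) ^ (1 - t) * (∫⁻ x, g x) ^ t ≤ ∫⁻ x, h x := by
  induction n with
  | zero =>
    intro f g h hf hg hh H
    have e (u : (Fin 0 → ℝ) → ℝ≥0∞) : ∫⁻ x, u x = u 0 := by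
      rw [lintegral_unique, volume_pi, Measure.pi_of_empty _ 0, measure_univ, mul_one]
      exact congrArg u (Subsingleton.elim _ _)
    rw [e, e, e]
    simpa using H 0 0
  | succ n ih =>
    intro f g h hf hg hh H
    set e := MeasurableEquiv.piFinSuccAbove (fun _ : Fin (n + 1) => ℝ) 0
    have hv := (volume_preserving_piFinSuccAbove (fun _ : Fin (n + 1) => ℝ) 0).symm
    have red (u : (Fin (n + 1) → ℝ) → ℝ≥0∞) (hu : Measurable u) :
        ∫⁻ x, u x = ∫⁻ a : ℝ, ∫⁻ v : Fin n → ℝ, u (e.symm (a, v)) := by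
      rw [← hv.lintegral_comp hu, Measure.volume_eq_prod, lintegral_prod]
      exact (hu.comp e.symm.measurable).aemeasurable
    rw [red f hf, red g hg, red h hh]
    have hm {u : (Fin (n + 1) → ℝ) → ℝ≥0∞} (hu : Measurable u) :
        Measurable fun q : ℝ × (Fin n → ℝ) => u (e.symm q) := hu.comp e.symm.measurable
    refine prekopa_leindler_real (hm hf).lintegral_prod_right' (hm hg).lintegral_prod_right'
      (hm hh).lintegral_prod_right' ht0 ht1 fun a b => ?_
    refine ih ((hm hf).comp measurable_prodMk_left) ((hm hg).comp measurable_prodMk_left)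
      ((hm hh).comp measurable_prodMk_left) fun v w => ?_
    refine (H _ _).trans (le_of_eq ?_)
    congr 1
    ext i
    refine Fin.cases ?_ (fun j => ?_) i <;>
      simp [e, MeasurableEquiv.piFinSuccAbove, Fin.insertNthEquiv]

variable {n : ℕ} {A : Fin n → ℝ}

theorem measurableSet_monSet : MeasurableSet (monSet A) := by
  have : monSet A = ⋂ i, {x : EuclideanSpace ℝ (Fin n) | 0 < A i → 0 < x i} := by
    ext x; simp [monSet]
  rw [this]
  refine MeasurableSet.iInter fun i => ?_
  by_cases h : 0 < A i
  · simp only [h, true_imp_iff]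
    exact measurableSet_lt measurable_const (by fun_prop)
  · simp [h]

theorem smul_mem_monSet_iff {a : ℝ} (ha : 0 < a) (x : EuclideanSpace ℝ (Fin n)) :
    a • x ∈ monSet A ↔ x ∈ monSet A := by
  simp [monSet, mul_pos_iff_of_pos_left ha]

theorem convexCombination_mem_monSet {t : ℝ} (ht0 : 0 < t) (ht1 : t < 1)
    {x y : EuclideanSpace ℝ (Fin n)} (hx : x ∈ monSet A) (hy : y ∈ monSet A) :
    (1 - t) • x + t • y ∈ monSet A := by
  intro i hi
  have h1 := hx i hi
  have h2 := hy i hi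
  have : 0 < 1 - t := by linarith
  simp only [PiLp.add_apply, PiLp.smul_apply, smul_eq_mul]
  positivity

theorem monWeight_nonneg (x : EuclideanSpace ℝ (Fin n)) : 0 ≤ monWeight A x :=
  Finset.prod_nonneg fun _ _ => Real.rpow_nonneg (abs_nonneg _) _

theorem continuous_monWeight (hA : ∀ i, 0 ≤ A i) : Continuous (monWeight A) := by
  refine continuous_finsetProd _ fun i _ => ?_
  exact Continuous.rpow_const (by fun_prop) fun x => Or.inr (hA i)

theorem measurable_monWeight : Measurable (monWeight A) := by
  unfold monWeight
  fun_prop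

theorem monWeight_smul {a : ℝ} (ha : 0 < a) (x : EuclideanSpace ℝ (Fin n)) :
    monWeight A (a • x) = a ^ (∑ i, A i) * monWeight A x := by
  simp only [monWeight, PiLp.smul_apply, smul_eq_mul, abs_mul, abs_of_pos ha]
  rw [Real.rpow_sum_of_pos ha, ← Finset.prod_mul_distrib]
  exact Finset.prod_congr rfl fun i _ => Real.mul_rpow ha.le (abs_nonneg _)

/-- The monomial weight is log-concave on its positivity region. -/
theorem monWeight_logConcave (hA : ∀ i, 0 ≤ A i) {t : ℝ} (ht0 : 0 < t) (ht1 : t < 1)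
    {x y : EuclideanSpace ℝ (Fin n)} (hx : x ∈ monSet A) (hy : y ∈ monSet A) :
    monWeight A x ^ (1 - t) * monWeight A y ^ t ≤ monWeight A ((1 - t) • x + t • y) := by
  have ht1' : 0 < 1 - t := by linarith
  unfold monWeight
  rw [← Real.finsetProd_rpow _ _ fun i _ => Real.rpow_nonneg (abs_nonneg _) _,
    ← Real.finsetProd_rpow _ _ fun i _ => Real.rpow_nonneg (abs_nonneg _) _,
    ← Finset.prod_mul_distrib]
  refine Finset.prod_le_prod (fun i _ => by positivity) fun i _ => ?_
  rcases (hA i).eq_or_lt with h | h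
  · simp [← h]
  · have h1 := hx i h
    have h2 := hy i h
    simp only [PiLp.add_apply, PiLp.smul_apply, smul_eq_mul]
    rw [abs_of_pos h1, abs_of_pos h2, abs_of_pos (by positivity), ← Real.rpow_mul h1.le,
      ← Real.rpow_mul h2.le, mul_comm (A i), mul_comm (A i), Real.rpow_mul h1.le,
      Real.rpow_mul h2.le, ← Real.mul_rpow (by positivity) (by positivity)]
    exact Real.rpow_le_rpow (by positivity)
      (Real.geom_mean_le_arith_mean2_weighted ht1'.le ht0.le h1.le h2.le (by ring)) h.le

/-- The weighted measure `x^A dx` on the positivity region. -/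
def monMeasure (A : Fin n → ℝ) : Measure (EuclideanSpace ℝ (Fin n)) :=
  (volume.restrict (monSet A)).withDensity fun x => ENNReal.ofReal (monWeight A x)

instance : SFinite (monMeasure A) := by unfold monMeasure; infer_instance

theorem measurable_ofReal_monWeight :
    Measurable fun x : EuclideanSpace ℝ (Fin n) => ENNReal.ofReal (monWeight A x) :=
  measurable_monWeight.ennreal_ofReal

theorem lintegral_monMeasure {φ : EuclideanSpace ℝ (Fin n) → ℝ≥0∞} (hφ : Measurable φ) :
    ∫⁻ x, φ x ∂monMeasure A =
      ∫⁻ x, (monSet A).indicator (fun x => ENNReal.ofReal (monWeight A x) * φ x) x := by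
  rw [monMeasure, lintegral_withDensity_eq_lintegral_mul _ measurable_ofReal_monWeight hφ,
    lintegral_indicator measurableSet_monSet]
  rfl

theorem integral_monMeasure (φ : EuclideanSpace ℝ (Fin n) → ℝ) :
    ∫ x, φ x ∂monMeasure A = ∫ x in monSet A, φ x * monWeight A x := by
  rw [monMeasure, integral_withDensity_eq_integral_toReal_smul measurable_ofReal_monWeight
    (Eventually.of_forall fun x => ENNReal.ofReal_lt_top)]
  simp only [ENNReal.toReal_ofReal (monWeight_nonneg _), smul_eq_mul]
  simp only [mul_comm]

theorem isLocallyFinite_monMeasure (hA : ∀ i, 0 ≤ A i) :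
    IsLocallyFiniteMeasure (monMeasure A) := by
  have : monMeasure A = (volume.withDensity
      fun x => ENNReal.ofReal (monWeight A x)).restrict (monSet A) := by
    rw [monMeasure, restrict_withDensity measurableSet_monSet]
  rw [this]
  have := IsLocallyFiniteMeasure.withDensity_ofReal (μ := (volume : Measure
    (EuclideanSpace ℝ (Fin n)))) (continuous_monWeight hA)
  infer_instance

/-- Homogeneity of the weighted measure. -/
theorem lintegral_monMeasure_comp_smul {φ : EuclideanSpace ℝ (Fin n) → ℝ≥0∞} (hφ : Measurable φ)
    {a : ℝ} (ha : 0 < a) :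
    ∫⁻ x, φ (a • x) ∂monMeasure A = ENNReal.ofReal (a ^ (-monDim A)) * ∫⁻ x, φ x ∂monMeasure A := by
  rw [lintegral_monMeasure hφ, lintegral_monMeasure (φ := fun x => φ (a • x)) (by fun_prop)]
  set Ψ := (monSet A).indicator (fun x => ENNReal.ofReal (monWeight A x) * φ x) with hΨ
  have hΨm : Measurable Ψ := (measurable_ofReal_monWeight.mul hφ).indicator measurableSet_monSet
  have e : ∀ x, (monSet A).indicator (fun x => ENNReal.ofReal (monWeight A x) * φ (a • x)) x =
      ENNReal.ofReal (a ^ (-∑ i, A i)) * Ψ (a • x) := by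
    intro x
    by_cases hx : x ∈ monSet A
    · have hx' := (smul_mem_monSet_iff ha x).mpr hx
      simp only [hΨ, Set.indicator_of_mem hx, Set.indicator_of_mem hx', monWeight_smul ha]
      rw [← mul_assoc, ← ENNReal.ofReal_mul (by positivity), ← mul_assoc, ← Real.rpow_add ha]
      simp
    · have hx' := (smul_mem_monSet_iff ha x).not.mpr hx
      simp [hΨ, Set.indicator_of_notMem hx, Set.indicator_of_notMem hx']
  have hc : ∫⁻ x, Ψ (a • x) = ENNReal.ofReal ((a ^ n)⁻¹) * ∫⁻ x, Ψ x := by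
    rw [← lintegral_map hΨm (measurable_const_smul a), Measure.map_addHaar_smul _ ha.ne',
      lintegral_smul_measure]
    simp [abs_of_pos ha]
  simp only [e]
  rw [lintegral_const_mul (f := fun x => Ψ (a • x)) _ (by fun_prop), hc, ← mul_assoc,
    ← ENNReal.ofReal_mul (by positivity)]
  congr 2
  rw [← Real.rpow_natCast, ← Real.rpow_neg ha.le, ← Real.rpow_add ha]
  simp [monDim]

/-- The Prékopa–Leindler inequality for the weighted measure. -/
theorem prekopa_leindler_monMeasure (hA : ∀ i, 0 ≤ A i) {t : ℝ} (ht0 : 0 < t) (ht1 : t < 1)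
    {f g h : EuclideanSpace ℝ (Fin n) → ℝ≥0∞} (hf : Measurable f) (hg : Measurable g)
    (hh : Measurable h)
    (H : ∀ x y, f x ^ (1 - t) * g y ^ t ≤ h ((1 - t) • x + t • y)) :
    (∫⁻ x, f x ∂monMeasure A) ^ (1 - t) * (∫⁻ x, g x ∂monMeasure A) ^ t ≤
      ∫⁻ x, h x ∂monMeasure A := by
  have ht1' : 0 < 1 - t := by linarith
  have hm {φ : EuclideanSpace ℝ (Fin n) → ℝ≥0∞} (hφ : Measurable φ) : Measurable
      ((monSet A).indicator (fun x => ENNReal.ofReal (monWeight A x) * φ x)) :=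
    (measurable_ofReal_monWeight.mul hφ).indicator measurableSet_monSet
  have hv := PiLp.volume_preserving_toLp (Fin n)
  rw [lintegral_monMeasure hf, lintegral_monMeasure hg, lintegral_monMeasure hh,
    ← hv.lintegral_comp (hm hf), ← hv.lintegral_comp (hm hg), ← hv.lintegral_comp (hm hh)]
  refine prekopa_leindler_pi ht0 ht1 ((hm hf).comp hv.measurable) ((hm hg).comp hv.measurable)
    ((hm hh).comp hv.measurable) fun x y => ?_
  simp only [WithLp.toLp_add, WithLp.toLp_smul]
  generalize WithLp.toLp 2 x = x
  generalize WithLp.toLp 2 y = y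
  by_cases hx : x ∈ monSet A
  swap
  · rw [Set.indicator_of_notMem hx, ENNReal.zero_rpow_of_pos ht1', zero_mul]; exact zero_le
  by_cases hy : y ∈ monSet A
  swap
  · rw [Set.indicator_of_notMem hy, ENNReal.zero_rpow_of_pos ht0, mul_zero]; exact zero_le
  rw [Set.indicator_of_mem hx, Set.indicator_of_mem hy,
    Set.indicator_of_mem (convexCombination_mem_monSet ht0 ht1 hx hy),
    ENNReal.mul_rpow_of_nonneg _ _ ht1'.le, ENNReal.mul_rpow_of_nonneg _ _ ht0.le,
    mul_mul_mul_comm]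
  refine mul_le_mul' ?_ (H x y)
  rw [ENNReal.ofReal_rpow_of_nonneg (monWeight_nonneg _) ht1'.le,
    ENNReal.ofReal_rpow_of_nonneg (monWeight_nonneg _) ht0.le, ← ENNReal.ofReal_mul
    (Real.rpow_nonneg (monWeight_nonneg _) _)]
  exact ENNReal.ofReal_le_ofReal (monWeight_logConcave hA ht0 ht1 hx hy)

/-- One-dimensional factor of the Gaussian times the monomial weight. -/
def monGaussianFactor (a s : ℝ) : ℝ := {s : ℝ | 0 < a → 0 < s}.indicator
  (fun s => |s| ^ a * exp (-s ^ 2)) s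

theorem monGaussianFactor_integrable_and_integral {a : ℝ} (ha : 0 ≤ a) :
    Integrable (monGaussianFactor a) ∧
      ∫ s, monGaussianFactor a s = Gamma ((a + 1) / 2) / if 0 < a then 2 else 1 := by
  rcases ha.eq_or_lt with rfl | ha
  · have : monGaussianFactor 0 = fun s => exp (-1 * s ^ 2) := by
      ext s; simp [monGaussianFactor]
    rw [this]
    refine ⟨integrable_exp_neg_mul_sq one_pos, ?_⟩
    rw [integral_gaussian]
    simp [← Real.Gamma_one_half_eq]
  · have hs : {s : ℝ | 0 < a → 0 < s} = Set.Ioi 0 := by ext s; simp [ha]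
    have e : Set.EqOn (fun s : ℝ => |s| ^ a * exp (-s ^ 2)) (fun s => s ^ a * exp (-s ^ (2 : ℝ)))
        (Set.Ioi 0) := by
      intro s hs
      simp only [abs_of_pos hs.out]
      norm_num
    have : monGaussianFactor a = (Set.Ioi 0).indicator (fun s => |s| ^ a * exp (-s ^ 2)) := by
      unfold monGaussianFactor; rw [hs]
    rw [this, integrable_indicator_iff measurableSet_Ioi, integral_indicator measurableSet_Ioi,
      integrableOn_congr_fun e measurableSet_Ioi, setIntegral_congr_fun measurableSet_Ioi e]
    refine ⟨integrableOn_rpow_mul_exp_neg_rpow (by linarith) (by norm_num), ?_⟩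
    rw [integral_rpow_mul_exp_neg_rpow (by norm_num) (by linarith)]
    simp [ha]; ring

theorem lintegral_gaussian_monMeasure (hA : ∀ i, 0 ≤ A i) :
    ∫⁻ x, ENNReal.ofReal (exp (-‖x‖ ^ 2)) ∂monMeasure A =
      ENNReal.ofReal ((∏ i, Gamma ((A i + 1) / 2)) / 2 ^ monK A) := by
  have hv := PiLp.volume_preserving_toLp (Fin n)
  have hm : Measurable ((monSet A).indicator fun x => ENNReal.ofReal (monWeight A x) *
      ENNReal.ofReal (exp (-‖x‖ ^ 2))) :=
    (measurable_ofReal_monWeight.mul (by fun_prop)).indicator measurableSet_monSet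
  rw [lintegral_monMeasure (by fun_prop), ← hv.lintegral_comp hm]
  have e (x : Fin n → ℝ) : (monSet A).indicator (fun x => ENNReal.ofReal (monWeight A x) *
      ENNReal.ofReal (exp (-‖x‖ ^ 2))) (WithLp.toLp 2 x) =
      ENNReal.ofReal (∏ i, monGaussianFactor (A i) (x i)) := by
    by_cases hx : WithLp.toLp 2 x ∈ monSet A
    · rw [Set.indicator_of_mem hx, ← ENNReal.ofReal_mul (monWeight_nonneg _)]
      congr 1
      rw [EuclideanSpace.norm_sq_eq, ← Finset.sum_neg_distrib, Real.exp_sum, monWeight,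
        ← Finset.prod_mul_distrib]
      refine Finset.prod_congr rfl fun i _ => ?_
      rw [monGaussianFactor, Set.indicator_of_mem (by exact hx i)]
      simp
    · rw [Set.indicator_of_notMem hx]
      simp only [monSet, Set.mem_ofPred_eq, not_forall] at hx
      obtain ⟨i, hi, hi'⟩ := hx
      rw [Finset.prod_eq_zero (Finset.mem_univ i), ENNReal.ofReal_zero]
      rw [monGaussianFactor, Set.indicator_of_notMem]
      simpa [hi] using hi'
  simp only [e]
  rw [volume_pi, ← ofReal_integral_eq_lintegral_ofReal
    (Integrable.fintype_prod fun i => (monGaussianFactor_integrable_and_integral (hA i)).1)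
    (Eventually.of_forall fun x => Finset.prod_nonneg fun i _ =>
      Set.indicator_nonneg (fun _ _ => by positivity) _),
    ← volume_pi, integral_fintype_prod_volume_eq_prod]
  congr 1
  rw [Finset.prod_congr rfl fun i _ => (monGaussianFactor_integrable_and_integral (hA i)).2,
    Finset.prod_div_distrib]
  congr 1
  rw [Finset.prod_ite, monK, Nat.card_eq_fintype_card, Fintype.card_subtype]
  simp

theorem monMeasure_ball {r : ℝ} (hr : 0 < r) :
    monMeasure A (Metric.ball 0 r) = ENNReal.ofReal (r ^ monDim A) * monMeasure A (Metric.ball 0 1) := by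
  have h := lintegral_monMeasure_comp_smul (A := A)
    (φ := (Metric.ball (0 : EuclideanSpace ℝ (Fin n)) 1).indicator 1)
    (measurable_one.indicator Metric.isOpen_ball.measurableSet) (inv_pos.mpr hr)
  rw [lintegral_indicator_one Metric.isOpen_ball.measurableSet, Real.inv_rpow hr.le,
    Real.rpow_neg hr.le, inv_inv] at h
  rw [← h, ← lintegral_indicator_one Metric.isOpen_ball.measurableSet]
  refine lintegral_congr fun x => ?_
  have : x ∈ Metric.ball 0 r ↔ r⁻¹ • x ∈ Metric.ball 0 1 := by
    simp [norm_smul, abs_of_pos hr, inv_mul_lt_iff₀ hr]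
  by_cases hx : x ∈ Metric.ball 0 r
  · rw [Set.indicator_of_mem hx, Set.indicator_of_mem (this.mp hx)]; rfl
  · rw [Set.indicator_of_notMem hx, Set.indicator_of_notMem (this.not.mp hx)]

theorem ofReal_exp_neg_rpow_eq_lintegral {q : ℝ} (hq : 0 < q) {r : ℝ} (hr : 0 ≤ r) :
    ENNReal.ofReal (exp (-r ^ q)) =
      ∫⁻ s in Set.Ioi r, ENNReal.ofReal (q * s ^ (q - 1) * exp (-s ^ q)) := by
  have hc : ContinuousWithinAt (fun s : ℝ => -exp (-s ^ q)) (Set.Ici r) r :=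
    (Real.continuous_exp.comp (Real.continuous_rpow_const hq.le).neg).neg.continuousWithinAt
  have hd : ∀ s ∈ Set.Ioi r, HasDerivAt (fun s : ℝ => -exp (-s ^ q))
      (q * s ^ (q - 1) * exp (-s ^ q)) s := by
    intro s hs
    have := ((Real.hasDerivAt_rpow_const (p := q) (Or.inl (hr.trans_lt hs).ne')).neg.exp).neg
    refine HasDerivAt.congr_deriv (by exact this) ?_
    simp only [Pi.neg_apply]
    ring
  have hp : ∀ s ∈ Set.Ioi r, 0 ≤ q * s ^ (q - 1) * exp (-s ^ q) := fun s hs => by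
    have : 0 < s := hr.trans_lt hs
    positivity
  have ht : Tendsto (fun s : ℝ => -exp (-s ^ q)) atTop (nhds 0) := by
    rw [← neg_zero]
    exact (Real.tendsto_exp_neg_atTop_nhds_zero.comp (tendsto_rpow_atTop hq)).neg
  have h1 := integrableOn_Ioi_deriv_of_nonneg hc hd hp ht
  have h2 := integral_Ioi_of_hasDerivAt_of_nonneg hc hd hp ht
  rw [← ofReal_integral_eq_lintegral_ofReal h1
    ((ae_restrict_iff' measurableSet_Ioi).mpr (Eventually.of_forall hp)), h2]
  simp

theorem lintegral_exp_neg_norm_rpow_monMeasure {q : ℝ} (hq : 0 < q) (hD : 0 < monDim A) :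
    ∫⁻ x, ENNReal.ofReal (exp (-‖x‖ ^ q)) ∂monMeasure A =
      ENNReal.ofReal (Gamma (1 + monDim A / q)) * monMeasure A (Metric.ball 0 1) := by
  set κ : ℝ → ℝ≥0∞ := fun s => ENNReal.ofReal (q * s ^ (q - 1) * exp (-s ^ q))
  have hκ : Measurable κ := by fun_prop
  have e : ∀ x : EuclideanSpace ℝ (Fin n), ENNReal.ofReal (exp (-‖x‖ ^ q)) =
      ∫⁻ s in Set.Ioi 0, {z : EuclideanSpace ℝ (Fin n) × ℝ | ‖z.1‖ < z.2}.indicator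
        (fun z => κ z.2) (x, s) := by
    intro x
    rw [ofReal_exp_neg_rpow_eq_lintegral hq (norm_nonneg x),
      ← lintegral_indicator measurableSet_Ioi, ← lintegral_indicator measurableSet_Ioi]
    refine lintegral_congr fun s => ?_
    by_cases hs : ‖x‖ < s
    · have : 0 < s := (norm_nonneg x).trans_lt hs
      simp [Set.indicator, hs, this, κ]
    · simp [Set.indicator, hs]
  have hm : Measurable ({z : EuclideanSpace ℝ (Fin n) × ℝ | ‖z.1‖ < z.2}.indicator
        (fun z => κ z.2)) :=
    (hκ.comp measurable_snd).indicator (measurableSet_lt (by fun_prop) (by fun_prop))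
  simp only [e]
  rw [lintegral_lintegral_swap (f := fun x s => {z : EuclideanSpace ℝ (Fin n) × ℝ |
    ‖z.1‖ < z.2}.indicator (fun z => κ z.2) (x, s)) hm.aemeasurable]
  have e2 : ∀ s ∈ Set.Ioi (0 : ℝ), ∫⁻ x, {z : EuclideanSpace ℝ (Fin n) × ℝ | ‖z.1‖ < z.2}.indicator
        (fun z => κ z.2) (x, s) ∂monMeasure A =
      ENNReal.ofReal (q * (s ^ (q - 1 + monDim A) * exp (-s ^ q))) *
        monMeasure A (Metric.ball 0 1) := by
    intro s hs
    have hs : 0 < s := hs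
    have : ∀ x, {z : EuclideanSpace ℝ (Fin n) × ℝ | ‖z.1‖ < z.2}.indicator
        (fun z => κ z.2) (x, s) = (Metric.ball 0 s).indicator (fun _ => κ s) x := by
      intro x; simp [Set.indicator]
    simp only [this]
    rw [lintegral_indicator_const Metric.isOpen_ball.measurableSet, monMeasure_ball hs, ← mul_assoc,
      ← ENNReal.ofReal_mul (by positivity), Real.rpow_add hs]
    congr 2
    ring
  rw [setLIntegral_congr_fun measurableSet_Ioi e2, lintegral_mul_const _ (by fun_prop)]
  congr 1
  have hint := integrableOn_rpow_mul_exp_neg_rpow (p := q) (s := q - 1 + monDim A)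
    (by linarith) hq
  rw [← ofReal_integral_eq_lintegral_ofReal (hint.const_mul q)
    ((ae_restrict_iff' measurableSet_Ioi).mpr (Eventually.of_forall fun s hs => by
      have : 0 < s := hs
      positivity)), integral_const_mul, integral_rpow_mul_exp_neg_rpow hq (by linarith)]
  congr 1
  rw [← mul_assoc, mul_one_div_cancel hq.ne', one_mul]
  congr 1
  field_simp
  ring

theorem log_sub_one_le_deriv_log_Gamma {x d : ℝ} (hx : 1 < x)
    (hd : HasDerivAt (log ∘ Gamma) d x) : log (x - 1) ≤ d := by
  have h0 : 0 < x - 1 := by linarith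
  have h := convexOn_log_Gamma.slope_le_of_hasDerivAt (x := x - 1) (y := x) h0
    (by simp; linarith) (by linarith) hd
  rw [slope_def_field] at h
  have hg : Gamma x = (x - 1) * Gamma (x - 1) := by
    simpa using Real.Gamma_add_one h0.ne'
  have hp := Real.Gamma_pos_of_pos h0
  simp only [Function.comp_apply, hg, log_mul h0.ne' hp.ne'] at h
  simpa using h

theorem log_Gamma_mul_lower_bound {a p : ℝ} (ha : 1 < a) (hp : 1 ≤ p) :
    a * p * log p + a * (p - 1) * (log (a - 1) - 1) + log (Gamma a) ≤ log (Gamma (a * p)) := by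
  have ha0 : 0 < a := by linarith
  set F : ℝ → ℝ := fun s => log (Gamma (a * s)) - a * s * log s - a * (s - 1) * (log (a - 1) - 1)
  have hF : ∀ s, 1 ≤ s → ∃ d, HasDerivAt F d s ∧ 0 ≤ d := by
    intro s hs
    have hs0 : 0 < s := by linarith
    have has : 0 < a * s := by positivity
    have has1 : 1 < a * s := by nlinarith
    have hG : DifferentiableAt ℝ Gamma (a * s) := Real.differentiableAt_Gamma fun m => by
      have : (0 : ℝ) ≤ m := m.cast_nonneg
      linarith
    have hd := hG.hasDerivAt.log (Real.Gamma_pos_of_pos has).ne'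
    set d := deriv Gamma (a * s) / Gamma (a * s)
    have h1 : HasDerivAt (fun s => log (Gamma (a * s))) (d * a) s := by
      have := HasDerivAt.comp s (h₂ := fun y => log (Gamma y)) (h := fun s => a * s) (by exact hd)
        ((hasDerivAt_id s).const_mul a)
      simpa [Function.comp_def] using this
    have h2 : HasDerivAt (fun s => a * s * log s) (a * log s + a * s * s⁻¹) s := by
      refine HasDerivAt.congr_deriv
        (by exact ((hasDerivAt_id s).const_mul a).mul (Real.hasDerivAt_log hs0.ne')) ?_
      simp
    have h3 : HasDerivAt (fun s => a * (s - 1) * (log (a - 1) - 1)) (a * (log (a - 1) - 1)) s := by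
      have := (((hasDerivAt_id s).sub_const 1).const_mul a).mul_const (log (a - 1) - 1)
      simpa using this
    refine ⟨_, (h1.sub h2).sub h3, ?_⟩
    have h4 := log_sub_one_le_deriv_log_Gamma has1 (by exact hd)
    have h5 : log (s * (a - 1)) ≤ log (a * s - 1) :=
      log_le_log (mul_pos hs0 (by linarith)) (by nlinarith)
    rw [log_mul hs0.ne' (by linarith)] at h5
    rw [mul_assoc a s, mul_inv_cancel₀ hs0.ne']
    nlinarith
  have hmono : MonotoneOn F (Set.Ici 1) := by
    refine monotoneOn_of_deriv_nonneg (convex_Ici 1) ?_ ?_ ?_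
    · intro s hs
      obtain ⟨d, hd, -⟩ := hF s hs
      exact hd.continuousAt.continuousWithinAt
    · intro s hs
      rw [interior_Ici] at hs
      obtain ⟨d, hd, -⟩ := hF s hs.out.le
      exact hd.differentiableAt.differentiableWithinAt
    · intro s hs
      rw [interior_Ici] at hs
      obtain ⟨d, hd, hd0⟩ := hF s hs.out.le
      rwa [hd.deriv]
  have := hmono (Set.mem_Ici.mpr le_rfl) (Set.mem_Ici.mpr hp) hp
  simp only [F, log_one, sub_self, mul_one, mul_zero, zero_mul, sub_zero] at this
  linarith

theorem young_of_conjExponent {p : ℝ} (hp : 1 < p) {μ : ℝ} (hμ : 0 < μ) {a r : ℝ}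
    (ha : 0 ≤ a) (hr : 0 ≤ r) :
    a * r ≤ μ ^ (p / (p - 1)) / (p / (p - 1)) * r ^ (p / (p - 1)) + μ ^ (-p) / p * a ^ p := by
  have hpq : p.HolderConjugate (p / (p - 1)) := Real.HolderConjugate.conjExponent hp
  have := Real.young_inequality_of_nonneg (a := a / μ) (b := μ * r) (by positivity) (by positivity)
    hpq
  rw [Real.div_rpow ha hμ.le, Real.mul_rpow hμ.le hr] at this
  have e : a / μ * (μ * r) = a * r := by field_simp
  rw [e] at this
  refine this.trans (le_of_eq ?_)
  rw [Real.rpow_neg hμ.le]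
  field_simp
  ring

/-- Young's inequality absorbs the displacement of a positive value. -/
theorem rpow_mul_exp_le_of_pos {p t s r q c K a b m : ℝ} (hp : 0 < p) (ht1 : t < 1) (ht0 : 0 < t)
    (hs : (1 - t) * s = t) (hm : 0 ≤ m) (ha : 0 ≤ a) (hb : 0 < b)
    (hab : a ≤ b + s * r * m)
    (hY : ∀ x : ℝ, 0 ≤ x → x * r ≤ c * r ^ q + K * x ^ p) :
    a ^ (p * (1 - t)) * exp (-(c * r ^ q)) ^ t ≤
      b ^ p * exp (t * (-p * log b + K * (p * m / b) ^ p)) := by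
  have ht1' : 0 < 1 - t := by linarith
  have h1 : a ≤ b * exp (s * r * m / b) := by
    refine hab.trans ?_
    have := Real.add_one_le_exp (s * r * m / b)
    calc b + s * r * m = b * (s * r * m / b + 1) := by field_simp; ring
      _ ≤ _ := by gcongr
  have h2 : a ^ (p * (1 - t)) ≤ (b * exp (s * r * m / b)) ^ (p * (1 - t)) :=
    Real.rpow_le_rpow ha h1 (by positivity)
  have h3 := hY (p * m / b) (by positivity)
  calc a ^ (p * (1 - t)) * exp (-(c * r ^ q)) ^ t
      ≤ (b * exp (s * r * m / b)) ^ (p * (1 - t)) * exp (-(c * r ^ q)) ^ t := by gcongr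
    _ = exp (p * (1 - t) * log b + t * (p * m / b * r - c * r ^ q)) := by
        rw [Real.mul_rpow hb.le (exp_pos _).le, Real.rpow_def_of_pos hb, ← Real.exp_mul,
          ← Real.exp_mul, ← Real.exp_add, ← Real.exp_add]
        congr 1
        have : s * r * m / b * (p * (1 - t)) = t * (p * m / b * r) := by
          calc _ = ((1 - t) * s) * (p * m / b * r) := by ring
            _ = _ := by rw [hs]
        rw [this]; ring
    _ ≤ exp (p * (1 - t) * log b + t * (K * (p * m / b) ^ p)) := by
        gcongr; linarith
    _ = b ^ p * exp (t * (-p * log b + K * (p * m / b) ^ p)) := by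
        rw [Real.rpow_def_of_pos hb, ← Real.exp_add]
        congr 1; ring

theorem rpow_sub_rpow_le {p a b : ℝ} (hp : 1 ≤ p) (ha : 0 ≤ a) (hb : 0 ≤ b) :
    a ^ p - b ^ p ≤ p * a ^ (p - 1) * (a - b) := by
  rcases ha.eq_or_lt with rfl | ha
  · rw [Real.zero_rpow (by linarith)]
    have h1 := Real.rpow_nonneg hb p
    rcases hp.eq_or_lt with rfl | hp
    · simp
    · rw [Real.zero_rpow (by linarith)]; simp; exact h1
  · have h := one_add_mul_self_le_rpow_one_add (s := b / a - 1) (p := p)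
      (by have : 0 ≤ b / a := by positivity
          linarith) hp
    rw [add_sub_cancel, Real.div_rpow hb ha.le, le_div_iff₀ (by positivity)] at h
    have e : a ^ p = a ^ (p - 1) * a := by
      rw [← Real.rpow_add_one ha.ne']; simp
    have : (1 + p * (b / a - 1)) * a ^ p = a ^ p - p * a ^ (p - 1) * (a - b) := by
      rw [e]; field_simp; ring
    linarith

theorem rpow_le_add_mul_of_le {p t κ B a b : ℝ} (hp : 1 ≤ p) (ht0 : 0 < t) (ht1 : t < 1)
    (hκ : 0 ≤ κ) (ha : 0 ≤ a) (haB : a ≤ B) (hb : 0 ≤ b) (hab : a ≤ b + t * κ) :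
    a ^ (p * (1 - t)) ≤ b ^ p + t * (1 + p * B ^ (p - 1) * κ) := by
  have ht1' : 0 < 1 - t := by linarith
  have h1 : a ^ (p * (1 - t)) ≤ (1 - t) * a ^ p + t * 1 := by
    have := Real.geom_mean_le_arith_mean2_weighted ht1'.le ht0.le (Real.rpow_nonneg ha p)
      zero_le_one (by ring)
    rwa [Real.one_rpow, mul_one, ← Real.rpow_mul ha] at this
  have h2 := rpow_sub_rpow_le hp ha hb
  have h3 : 0 ≤ a ^ p := Real.rpow_nonneg ha p
  have h4 : a ^ (p - 1) ≤ B ^ (p - 1) := Real.rpow_le_rpow ha haB (by linarith)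
  have h5 : 0 ≤ a ^ (p - 1) := Real.rpow_nonneg ha _
  have h6 : p * a ^ (p - 1) * (a - b) ≤ p * B ^ (p - 1) * (t * κ) :=
    calc p * a ^ (p - 1) * (a - b) ≤ p * a ^ (p - 1) * (t * κ) := by
          gcongr; linarith
      _ ≤ _ := by gcongr
  nlinarith

theorem rpow_le_mul_rpow_of_le_mul {p t σ κ L a : ℝ} (ht0 : 0 < t) (ht1 : t < 1)
    (hσ : 1 + σ ≤ p * (1 - t)) (hp : 0 < p) (hL : 1 ≤ L) (hκL : κ ≤ L) (ha : 0 ≤ a)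
    (hab : a ≤ t * κ) :
    a ^ (p * (1 - t)) ≤ t * (L ^ p * t ^ σ) := by
  have ht1' : 0 < 1 - t := by linarith
  calc a ^ (p * (1 - t)) ≤ (t * L) ^ (p * (1 - t)) :=
        Real.rpow_le_rpow ha (hab.trans (by gcongr)) (by positivity)
    _ = t ^ (p * (1 - t)) * L ^ (p * (1 - t)) := Real.mul_rpow ht0.le (by linarith)
    _ ≤ t ^ (1 + σ) * L ^ p := by
        refine mul_le_mul (Real.rpow_le_rpow_of_exponent_ge ht0 ht1.le hσ)
          (Real.rpow_le_rpow_of_exponent_le hL (by nlinarith)) (by positivity) (by positivity)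
    _ = t * (L ^ p * t ^ σ) := by rw [Real.rpow_add ht0, Real.rpow_one]; ring

theorem tendsto_exp_mul_sub_one_div {t X : ℕ → ℝ} {x : ℝ} (ht0 : ∀ n, 0 < t n)
    (ht : Tendsto t atTop (nhds 0)) (hX : Tendsto X atTop (nhds x)) :
    Tendsto (fun n => (exp (t n * X n) - 1) / t n) atTop (nhds x) := by
  have h2 : Tendsto (fun n => X n * exp (t n * X n)) atTop (nhds x) := by
    have := hX.mul ((Real.continuous_exp.tendsto _).comp (ht.mul hX))
    simpa using this
  refine tendsto_of_tendsto_of_tendsto_of_le_of_le hX h2 (fun n => ?_) fun n => ?_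
  · have := Real.add_one_le_exp (t n * X n)
    simp only
    rw [le_div_iff₀ (ht0 n)]; linarith
  · have h := Real.add_one_le_exp (-(t n * X n))
    have hm := mul_le_mul_of_nonneg_right h (exp_pos (t n * X n)).le
    rw [← Real.exp_add, neg_add_cancel, Real.exp_zero] at hm
    simp only
    rw [div_le_iff₀ (ht0 n)]; linarith

theorem exists_abs_le_add_of_hasCompactSupport {E : Type*} [NormedAddCommGroup E] [NormedSpace ℝ E]
    {f : E → ℝ} (hf : ContDiff ℝ 1 f) (hs : HasCompactSupport f) {δ R : ℝ} (hδ : 0 < δ)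
    (hR : 0 ≤ R) :
    ∃ s₀ > 0, ∀ s, 0 < s → s < s₀ → ∀ x y : E, ‖y‖ ≤ R →
      |f x| ≤ |f (x + s • y)| + s * ‖y‖ * (‖fderiv ℝ f (x + s • y)‖ + δ) := by
  have hu : UniformContinuous (fderiv ℝ f) :=
    (hs.fderiv (𝕜 := ℝ)).uniformContinuous_of_continuous (hf.continuous_fderiv one_ne_zero)
  obtain ⟨η, hη, hη'⟩ := Metric.uniformContinuous_iff.mp hu δ hδ
  refine ⟨η / (R + 1), by positivity, fun s hs0 hs1 x y hy => ?_⟩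
  have hlt : s * ‖y‖ < η := by
    rw [lt_div_iff₀ (by positivity)] at hs1
    nlinarith [norm_nonneg y]
  set z := x + s • y with hz
  have hxz : x - z = -(s • y) := by rw [hz]; abel
  have hxz' : ‖x - z‖ = s * ‖y‖ := by rw [hxz, norm_neg, norm_smul, Real.norm_of_nonneg hs0.le]
  have hb : ∀ w ∈ Metric.ball z η, ‖fderiv ℝ f w‖ ≤ ‖fderiv ℝ f z‖ + δ := by
    intro w hw
    have h := hη' (Metric.mem_ball.mp hw)
    rw [dist_eq_norm] at h
    have := norm_le_norm_add_norm_sub' (fderiv ℝ f w) (fderiv ℝ f z)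
    linarith
  have h := (convex_ball z η).norm_image_sub_le_of_norm_fderiv_le (𝕜 := ℝ) (f := f)
    (fun w _ => (hf.differentiable one_ne_zero).differentiableAt) hb (Metric.mem_ball_self hη)
    (y := x) (by rw [Metric.mem_ball, dist_eq_norm, hxz']; exact hlt)
  rw [hxz', Real.norm_eq_abs] at h
  have := abs_sub_abs_le_abs_sub (f x) (f z)
  linarith

/-- Bound for the first-order increment, in the parameter `t`, of the supremal convolution of
`|f| ^ p`, in terms of the value `b` of `|f|` and a bound `m` for the gradient. -/
def supConvMajorant (p K σ L C t b m : ℝ) : ℝ :=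
  if b = 0 then L ^ p * t ^ σ
  else min (b ^ p * ((exp (t * (-p * log b + K * (p * m / b) ^ p)) - 1) / t)) C

theorem rpow_mul_exp_le_add_majorant {p t s r q c K a b m B R M σ L C : ℝ} (hp : 1 < p)
    (ht0 : 0 < t) (ht2 : t ≤ 1 / 2) (hs : (1 - t) * s = t) (hr : 0 ≤ r) (hrR : r ≤ R)
    (hm : 0 ≤ m) (hmM : m ≤ M) (ha : 0 ≤ a) (haB : a ≤ B) (hb : 0 ≤ b)
    (hab : a ≤ b + s * r * m) (hσ : 1 + σ ≤ p * (1 - t)) (hc : 0 ≤ c)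
    (hL : 1 ≤ L) (hRL : 2 * R * M ≤ L) (hC : C = 1 + p * B ^ (p - 1) * (2 * R * M))
    (hY : ∀ x : ℝ, 0 ≤ x → x * r ≤ c * r ^ q + K * x ^ p) :
    a ^ (p * (1 - t)) * exp (-(c * r ^ q)) ^ t ≤ b ^ p + t * supConvMajorant p K σ L C t b m := by
  have ht1 : t < 1 := by linarith
  have hs2 : s ≤ 2 * t := by nlinarith
  have hR : 0 ≤ R := hr.trans hrR
  have hM : 0 ≤ M := hm.trans hmM
  have hab' : a ≤ b + t * (2 * R * M) := by
    refine hab.trans ?_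
    have : s * r * m ≤ (2 * t) * R * M := by gcongr
    linarith
  have hexp : exp (-(c * r ^ q)) ^ t ≤ 1 :=
    Real.rpow_le_one (exp_pos _).le (Real.exp_le_one_iff.mpr (by simp; positivity)) ht0.le
  have hle : a ^ (p * (1 - t)) * exp (-(c * r ^ q)) ^ t ≤ a ^ (p * (1 - t)) :=
    mul_le_of_le_one_right (Real.rpow_nonneg ha _) hexp
  rcases hb.eq_or_lt with rfl | hb'
  · rw [supConvMajorant, if_pos rfl, Real.zero_rpow (by linarith), zero_add]
    exact hle.trans (rpow_le_mul_rpow_of_le_mul ht0 ht1 hσ (by linarith) hL hRL ha (by linarith))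
  · rw [supConvMajorant, if_neg hb'.ne', mul_min_of_nonneg _ _ ht0.le, ← min_add_add_left, le_min_iff]
    constructor
    · refine (rpow_mul_exp_le_of_pos (by linarith) ht1 ht0 hs hm ha hb' hab hY).trans_eq ?_
      field_simp
      ring
    · rw [hC]
      exact hle.trans (rpow_le_add_mul_of_le hp.le ht0 ht1 (by positivity) ha haB hb hab')

theorem abs_supConvMajorant_le {p K σ L C t b m B : ℝ} (hp : 0 < p) (hK : 0 ≤ K) (hσ : 0 < σ)
    (hL : 0 ≤ L) (hC : 0 ≤ C) (ht0 : 0 < t) (ht1 : t < 1) (hb : 0 ≤ b) (hbB : b ≤ B)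
    (hm : 0 ≤ m) :
    |supConvMajorant p K σ L C t b m| ≤ L ^ p + C + p * B ^ p * B := by
  have hB : 0 ≤ B := hb.trans hbB
  have hLp : 0 ≤ L ^ p := by positivity
  have hBp : 0 ≤ p * B ^ p * B := by positivity
  rw [supConvMajorant]
  split_ifs with h
  · have : t ^ σ ≤ 1 := Real.rpow_le_one ht0.le ht1.le hσ.le
    rw [abs_of_nonneg (by positivity)]
    nlinarith
  · have hb' : 0 < b := lt_of_le_of_ne hb (Ne.symm h)
    rw [abs_le]
    refine ⟨le_min ?_ (by linarith), (min_le_right _ _).trans (by linarith)⟩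
    have h1 : -(p * b) ≤ (exp (t * (-p * log b + K * (p * m / b) ^ p)) - 1) / t := by
      rw [le_div_iff₀ ht0]
      have h2 := Real.add_one_le_exp (t * (-p * log b + K * (p * m / b) ^ p))
      have h3 : log b ≤ b := (Real.log_le_sub_one_of_pos hb').trans (by linarith)
      have h4 : 0 ≤ t * (K * (p * m / b) ^ p) := by positivity
      have h5 : 0 ≤ t * (p * (b - log b)) := mul_nonneg ht0.le (mul_nonneg hp.le (by linarith))
      nlinarith
    have h2 : b ^ p * (p * b) ≤ B ^ p * (p * B) := by gcongr
    have h3 := mul_le_mul_of_nonneg_left h1 (Real.rpow_nonneg hb p)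
    linarith

theorem tendsto_supConvMajorant {p K σ L C b m : ℝ} {t μ : ℕ → ℝ} (hp : 0 < p) (hσ : 0 < σ)
    (ht0 : ∀ k, 0 < t k) (ht : Tendsto t atTop (nhds 0)) (hμ : Tendsto μ atTop (nhds m)) :
    Tendsto (fun k => supConvMajorant p K σ L C (t k) b (μ k)) atTop
      (nhds (if b = 0 then 0 else min (b ^ p * (-p * log b + K * (p * m / b) ^ p)) C)) := by
  unfold supConvMajorant
  split_ifs with h
  · have := (ht.rpow_const (p := σ) (Or.inr hσ.le)).const_mul (L ^ p)
    simpa [Real.zero_rpow hσ.ne'] using this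
  · refine Tendsto.min ?_ tendsto_const_nhds
    refine (tendsto_exp_mul_sub_one_div ht0 ht ?_).const_mul _
    refine tendsto_const_nhds.add (Tendsto.const_mul _ ?_)
    exact ((hμ.const_mul p).div_const b).rpow_const (Or.inr hp.le)

theorem measurable_supConvMajorant {α : Type*} [MeasurableSpace α] {p K σ L C t : ℝ} {b m : α → ℝ}
    (hb : Measurable b) (hm : Measurable m) :
    Measurable fun x => supConvMajorant p K σ L C t (b x) (m x) := by
  unfold supConvMajorant
  exact Measurable.ite (hb (measurableSet_singleton 0)) measurable_const (by fun_prop)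

theorem ite_min_le_neg_mul_log {p K C b m : ℝ} (hK : 0 ≤ K) (hp : 0 < p) (hb : 0 ≤ b)
    (hm : 0 ≤ m) :
    (if b = 0 then 0 else min (b ^ p * (-p * log b + K * (p * m / b) ^ p)) C) ≤
      -(b ^ p * log (b ^ p)) + K * p ^ p * m ^ p := by
  split_ifs with h
  · subst h
    rw [Real.zero_rpow hp.ne']
    simp; positivity
  · have hb' : 0 < b := lt_of_le_of_ne hb (Ne.symm h)
    refine (min_le_left _ _).trans_eq ?_
    rw [Real.log_rpow hb', Real.div_rpow (by positivity) hb, Real.mul_rpow hp.le hm]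
    field_simp

theorem prekopa_leindler_monMeasure_scaled (hA : ∀ i, 0 ≤ A i) {t s : ℝ} (ht0 : 0 < t)
    (ht1 : t < 1) (hs : (1 - t) * s = t)
    {f g h : EuclideanSpace ℝ (Fin n) → ℝ≥0∞} (hf : Measurable f) (hg : Measurable g)
    (hh : Measurable h) (H : ∀ x y, f x ^ (1 - t) * g y ^ t ≤ h (x + s • y)) :
    (∫⁻ x, f x ∂monMeasure A) ^ (1 - t) * (∫⁻ x, g x ∂monMeasure A) ^ t ≤
      ENNReal.ofReal ((1 - t) ^ monDim A) * ∫⁻ x, h x ∂monMeasure A := by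
  have ht1' : 0 < 1 - t := by linarith
  have := prekopa_leindler_monMeasure hA ht0 ht1 hf hg
    (h := fun x => h ((1 - t)⁻¹ • x)) (by fun_prop) fun x y => by
      have e : (1 - t)⁻¹ • ((1 - t) • x + t • y) = x + s • y := by
        rw [smul_add, smul_smul, smul_smul, inv_mul_cancel₀ ht1'.ne', one_smul]
        congr 2
        field_simp; linarith
      simp only [e]
      exact H x y
  refine this.trans_eq ?_
  rw [lintegral_monMeasure_comp_smul hh (inv_pos.mpr ht1'), Real.inv_rpow ht1'.le,
    Real.rpow_neg ht1'.le, inv_inv]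

theorem log_add_le_of_rpow_le {t D z V : ℝ} (ht0 : 0 < t) (ht1 : t < 1) (hD : 0 ≤ D) (hz : 0 < z)
    (h : z ^ t ≤ (1 - t) ^ D * (1 + t * V)) : log z + D ≤ V := by
  have ht1' : 0 < 1 - t := by linarith
  have hpos : 0 < (1 - t) ^ D * (1 + t * V) := (Real.rpow_pos_of_pos hz t).trans_le h
  have hV : 0 < 1 + t * V := (mul_pos_iff_of_pos_left (Real.rpow_pos_of_pos ht1' D)).mp hpos
  have h1 := Real.log_le_log (Real.rpow_pos_of_pos hz t) h
  rw [Real.log_rpow hz, Real.log_mul (by positivity) hV.ne', Real.log_rpow ht1'] at h1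
  have h2 := Real.log_le_sub_one_of_pos ht1'
  have h3 := Real.log_le_sub_one_of_pos hV
  have : t * (log z + D) ≤ t * V := by nlinarith
  exact le_of_mul_le_mul_left this ht0

/-- First-order comparison obtained from the Prékopa–Leindler inequality. -/
theorem log_add_monDim_le_setIntegral_majorant (hA : ∀ i, 0 ≤ A i) {p : ℝ} (hp : 1 < p)
    {f : EuclideanSpace ℝ (Fin n) → ℝ} (hf : ContDiff ℝ 1 f)
    {ρ B M R t s δ q c K L σ C z : ℝ} (hρ : ∀ x, ρ < ‖x‖ → f x = 0)
    (hB : ∀ x, |f x| ≤ B) (hM : ∀ x, ‖fderiv ℝ f x‖ + δ ≤ M) (hδ : 0 ≤ δ) (hR : 0 ≤ R)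
    (ht0 : 0 < t) (ht2 : t ≤ 1 / 2) (hs : (1 - t) * s = t)
    (hmod : ∀ x y : EuclideanSpace ℝ (Fin n), ‖y‖ ≤ R →
      |f x| ≤ |f (x + s • y)| + s * ‖y‖ * (‖fderiv ℝ f (x + s • y)‖ + δ))
    (hσ : 0 < σ) (hσt : 1 + σ ≤ p * (1 - t)) (hc : 0 ≤ c) (hK : 0 ≤ K)
    (hL : 1 ≤ L) (hRL : 2 * R * M ≤ L) (hC : C = 1 + p * B ^ (p - 1) * (2 * R * M))
    (hY : ∀ x r : ℝ, 0 ≤ x → 0 ≤ r → x * r ≤ c * r ^ q + K * x ^ p)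
    (hnorm : ∫ x, |f x| ^ p ∂monMeasure A = 1) (hz : 0 < z)
    (hzG : ENNReal.ofReal z ≤ ∫⁻ y in Metric.closedBall 0 R, ENNReal.ofReal (exp (-(c * ‖y‖ ^ q)))
      ∂monMeasure A) :
    log z + monDim A ≤ ∫ x in Metric.closedBall 0 (ρ + R),
      supConvMajorant p K σ L C t |f x| (‖fderiv ℝ f x‖ + δ) ∂monMeasure A := by
  have ht1 : t < 1 := by linarith
  have ht1' : 0 < 1 - t := by linarith
  have hp0 : 0 < p := by linarith
  have hs0 : 0 < s := by
    by_contra hs'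
    nlinarith
  have hs1 : s ≤ 1 := by nlinarith
  have hB0 : 0 ≤ B := (abs_nonneg _).trans (hB 0)
  have hM0 : 0 ≤ M := le_trans (by positivity) (hM 0)
  have hC0 : 0 ≤ C := by rw [hC]; positivity
  have hD : 0 ≤ monDim A := by
    have := Finset.sum_nonneg fun i (_ : i ∈ Finset.univ) => hA i
    unfold monDim; positivity
  have := isLocallyFinite_monMeasure hA
  have hfc := hf.continuous
  have hgc := hf.continuous_fderiv one_ne_zero
  set U := Metric.closedBall (0 : EuclideanSpace ℝ (Fin n)) (ρ + R) with hU
  have hUc : IsCompact U := isCompact_closedBall _ _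
  have hUm : MeasurableSet U := hUc.measurableSet
  set v := fun x => supConvMajorant p K σ L C t |f x| (‖fderiv ℝ f x‖ + δ) with hv
  have hvm : Measurable v := measurable_supConvMajorant (by fun_prop) (by fun_prop)
  have hvb : ∀ x, ‖v x‖ ≤ L ^ p + C + p * B ^ p * B := fun x =>
    abs_supConvMajorant_le hp0 hK hσ (by linarith) hC0 ht0 ht1 (abs_nonneg _) (hB x)
      (by positivity)
  have hvi : IntegrableOn v U (monMeasure A) :=
    Measure.integrableOn_of_bounded hUc.measure_lt_top.ne hvm.aestronglyMeasurable
      (Eventually.of_forall hvb)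
  have hfpc : Continuous fun x => |f x| ^ p := hfc.abs.rpow_const fun x => Or.inr hp0.le
  have hfi : IntegrableOn (fun x => |f x| ^ p) U (monMeasure A) :=
    hfpc.continuousOn.integrableOn_compact hUc
  have hfU : ∀ x ∉ U, |f x| ^ p = 0 := fun x hx => by
    rw [hU, mem_closedBall_zero_iff, not_le] at hx
    rw [hρ x (by linarith), abs_zero, Real.zero_rpow hp0.ne']
  have hfint : Integrable (fun x => |f x| ^ p) (monMeasure A) :=
    (integrableOn_iff_integrable_of_support_subset fun x hx => by
      by_contra h; exact hx (hfU x h)).mp hfi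
  have key : ∀ x y : EuclideanSpace ℝ (Fin n), ‖y‖ ≤ R →
      |f x| ^ (p * (1 - t)) * exp (-(c * ‖y‖ ^ q)) ^ t ≤
        |f (x + s • y)| ^ p + t * v (x + s • y) := fun x y hy =>
    rpow_mul_exp_le_add_majorant hp ht0 ht2 hs (norm_nonneg y) hy (by positivity) (hM _)
      (abs_nonneg _) (hB x) (abs_nonneg _) (hmod x y hy) hσt hc hL hRL hC
      fun u hu => hY u ‖y‖ hu (norm_nonneg y)
  have hpl := prekopa_leindler_monMeasure_scaled hA ht0 ht1 hs
    (f := fun x => ENNReal.ofReal (|f x| ^ p))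
    (g := (Metric.closedBall 0 R).indicator fun y => ENNReal.ofReal (exp (-(c * ‖y‖ ^ q))))
    (h := U.indicator fun x => ENNReal.ofReal (|f x| ^ p + t * v x))
    (by fun_prop) (Measurable.indicator (by fun_prop) Metric.isClosed_closedBall.measurableSet)
    (Measurable.indicator (by fun_prop) hUm) (fun x y => by
      by_cases hy : y ∈ Metric.closedBall (0 : EuclideanSpace ℝ (Fin n)) R
      · have hyR : ‖y‖ ≤ R := by simpa using hy
        rw [Set.indicator_of_mem hy, ENNReal.ofReal_rpow_of_nonneg (by positivity) ht1'.le,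
          ENNReal.ofReal_rpow_of_nonneg (by positivity) ht0.le,
          ← ENNReal.ofReal_mul (by positivity), ← Real.rpow_mul (abs_nonneg _)]
        by_cases hx : x + s • y ∈ U
        · rw [Set.indicator_of_mem hx]
          exact ENNReal.ofReal_le_ofReal (key x y hyR)
        · rw [hU, mem_closedBall_zero_iff, not_le] at hx
          have h1 := norm_add_le x (s • y)
          rw [norm_smul, Real.norm_of_nonneg hs0.le] at h1
          have : s * ‖y‖ ≤ 1 * R := by gcongr
          rw [hρ x (by linarith), abs_zero, Real.zero_rpow (by positivity)]
          simp
      · rw [Set.indicator_of_notMem hy, ENNReal.zero_rpow_of_pos ht0]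
        simp)
  have hint : ∫⁻ x in U, ENNReal.ofReal (|f x| ^ p + t * v x) ∂monMeasure A =
      ENNReal.ofReal (1 + t * ∫ x in U, v x ∂monMeasure A) := by
    rw [← ofReal_integral_eq_lintegral_ofReal
        (by exact hfi.add (hvi.const_mul t)) (Eventually.of_forall fun x =>
        (key x 0 (by simpa using hR)).trans' (by positivity) |>.trans_eq (by simp)),
      integral_add hfi (hvi.const_mul t), integral_const_mul,
      setIntegral_eq_integral_of_forall_compl_eq_zero hfU, hnorm]
  rw [lintegral_indicator Metric.isClosed_closedBall.measurableSet, lintegral_indicator hUm,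
    ← ofReal_integral_eq_lintegral_ofReal hfint (Eventually.of_forall fun x => by positivity),
    hnorm, ENNReal.ofReal_one, ENNReal.one_rpow, one_mul, hint,
    ← ENNReal.ofReal_mul (by positivity)] at hpl
  refine log_add_le_of_rpow_le ht0 ht1 hD hz ?_
  have h2 := (ENNReal.rpow_le_rpow hzG ht0.le).trans hpl
  rw [ENNReal.ofReal_rpow_of_nonneg hz.le ht0.le] at h2
  by_contra! h3
  rw [ENNReal.ofReal_le_ofReal_iff'] at h2
  rcases h2 with h2 | h2
  · linarith
  · exact absurd h2 (not_le.mpr (Real.rpow_pos_of_pos hz t))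

theorem continuous_abs_rpow_mul_log {X : Type*} [TopologicalSpace X] {f : X → ℝ} {p : ℝ}
    (hp : 0 < p) (hf : Continuous f) : Continuous fun x => |f x| ^ p * log (|f x| ^ p) :=
  Real.continuous_mul_log.comp (hf.abs.rpow_const fun _ => Or.inr hp.le)

theorem integrable_abs_rpow_mul_log (hA : ∀ i, 0 ≤ A i) {p : ℝ} (hp : 0 < p)
    {f : EuclideanSpace ℝ (Fin n) → ℝ} (hf : Continuous f) (hs : HasCompactSupport f) :
    Integrable (fun x => |f x| ^ p * log (|f x| ^ p)) (monMeasure A) := by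
  have := isLocallyFinite_monMeasure hA
  exact (continuous_abs_rpow_mul_log hp hf).integrable_of_hasCompactSupport
    (hs.comp_left (g := fun y => |y| ^ p * log (|y| ^ p)) (by simp [hp.ne']))

theorem integrable_norm_rpow {F : Type*} [NormedAddCommGroup F] (hA : ∀ i, 0 ≤ A i) {p : ℝ}
    (hp : 0 < p) {g : EuclideanSpace ℝ (Fin n) → F} (hg : Continuous g)
    (hs : HasCompactSupport g) : Integrable (fun x => ‖g x‖ ^ p) (monMeasure A) := by
  have := isLocallyFinite_monMeasure hA
  exact (hg.norm.rpow_const fun _ => Or.inr hp.le).integrable_of_hasCompactSupport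
    (hs.comp_left (g := fun y => ‖y‖ ^ p) (by simp [hp.ne']))

theorem log_add_monDim_le_of_le_setLIntegral (hA : ∀ i, 0 ≤ A i) {p : ℝ} (hp : 1 < p)
    {f : EuclideanSpace ℝ (Fin n) → ℝ} (hf : ContDiff ℝ 1 f) (hsupp : HasCompactSupport f)
    {R q c K z : ℝ} (hR : 0 ≤ R) (hc : 0 ≤ c) (hK : 0 ≤ K)
    (hY : ∀ x r : ℝ, 0 ≤ x → 0 ≤ r → x * r ≤ c * r ^ q + K * x ^ p)
    (hnorm : ∫ x, |f x| ^ p ∂monMeasure A = 1) (hz : 0 < z)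
    (hzG : ENNReal.ofReal z ≤ ∫⁻ y in Metric.closedBall 0 R, ENNReal.ofReal (exp (-(c * ‖y‖ ^ q)))
      ∂monMeasure A) :
    log z + monDim A ≤ -(∫ x, |f x| ^ p * log (|f x| ^ p) ∂monMeasure A) +
      K * p ^ p * ∫ x, ‖fderiv ℝ f x‖ ^ p ∂monMeasure A := by
  have hp0 : 0 < p := by linarith
  have := isLocallyFinite_monMeasure hA
  have hfc := hf.continuous
  have hgc := hf.continuous_fderiv one_ne_zero
  have hgs := hsupp.fderiv (𝕜 := ℝ)
  obtain ⟨ρ, hρ⟩ := hsupp.isCompact.isBounded.subset_closedBall 0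
  obtain ⟨B, hB⟩ := hsupp.exists_bound_of_continuous hfc
  obtain ⟨M, hM⟩ := hgs.exists_bound_of_continuous hgc
  simp only [Real.norm_eq_abs] at hB
  have hM0 : 0 ≤ M := (norm_nonneg _).trans (hM 0)
  have hB0 : 0 ≤ B := (abs_nonneg _).trans (hB 0)
  have hρf : ∀ x, ρ < ‖x‖ → f x = 0 := fun x hx => by
    by_contra h
    have := hρ (subset_tsupport f h)
    rw [mem_closedBall_zero_iff] at this
    linarith
  have hρg : ∀ x, ρ < ‖x‖ → fderiv ℝ f x = 0 := fun x hx => by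
    by_contra h
    have := hρ (support_fderiv_subset ℝ h)
    rw [mem_closedBall_zero_iff] at this
    linarith
  set σ := (p - 1) / 2 with hσdef
  have hσ : 0 < σ := by rw [hσdef]; linarith
  set L := max 1 (2 * R * (M + 1))
  set C := 1 + p * B ^ (p - 1) * (2 * R * (M + 1)) with hC
  have hC0 : 0 ≤ C := by rw [hC]; positivity
  set δ : ℕ → ℝ := fun k => 1 / ((k : ℝ) + 1)
  have hδ0 : ∀ k, 0 < δ k := fun k => by positivity
  have hδ1 : ∀ k, δ k ≤ 1 := fun k => by
    have : (0 : ℝ) ≤ k := k.cast_nonneg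
    exact (div_le_one (by linarith)).mpr (by linarith)
  have hδ : Tendsto δ atTop (nhds 0) := tendsto_one_div_add_atTop_nhds_zero_nat
  choose s₀ hs₀ hs₀' using fun k => exists_abs_le_add_of_hasCompactSupport hf hsupp (hδ0 k) hR
  set t : ℕ → ℝ := fun k => min (min (δ k / 2) (σ / p)) (s₀ k / 3)
  have ht0 : ∀ k, 0 < t k := fun k =>
    lt_min (lt_min (half_pos (hδ0 k)) (by positivity)) (by have := hs₀ k; positivity)
  have ht1 : ∀ k, t k ≤ δ k / 2 := fun k => (min_le_left _ _).trans (min_le_left _ _)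
  have ht2 : ∀ k, t k ≤ 1 / 2 := fun k => (ht1 k).trans (by linarith [hδ1 k])
  have ht3 : ∀ k, p * t k ≤ σ := fun k => by
    have : t k ≤ σ / p := (min_le_left _ _).trans (min_le_right _ _)
    rw [le_div_iff₀ hp0] at this
    linarith
  have ht4 : ∀ k, t k ≤ s₀ k / 3 := fun k => min_le_right _ _
  have ht : Tendsto t atTop (nhds 0) :=
    squeeze_zero (fun k => (ht0 k).le) ht1 (by simpa using hδ.div_const 2)
  set U := Metric.closedBall (0 : EuclideanSpace ℝ (Fin n)) (ρ + R) with hU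
  have hUc : IsCompact U := isCompact_closedBall _ _
  have hbound : ∀ k, log z + monDim A ≤ ∫ x in U,
      supConvMajorant p K σ L C (t k) |f x| (‖fderiv ℝ f x‖ + δ k) ∂monMeasure A := fun k => by
    have h1 : 0 < 1 - t k := by linarith [ht2 k]
    have hs0 : 0 < t k / (1 - t k) := div_pos (ht0 k) h1
    refine log_add_monDim_le_setIntegral_majorant hA hp hf hρf hB (M := M + 1)
      (fun x => add_le_add (hM x) (hδ1 k)) (hδ0 k).le hR (ht0 k) (ht2 k)
      (mul_div_cancel₀ _ h1.ne') (hs₀' k _ hs0 ?_) hσ ?_ hc hK (le_max_left _ _) (le_max_right _ _)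
      hC hY hnorm hz hzG
    · rw [div_lt_iff₀ h1]
      nlinarith [ht2 k, ht4 k, hs₀ k]
    · linarith [ht3 k]
  have hdom : ∀ k x, ‖supConvMajorant p K σ L C (t k) |f x| (‖fderiv ℝ f x‖ + δ k)‖ ≤
      L ^ p + C + p * B ^ p * B := fun k x => by
    have := hδ0 k
    exact abs_supConvMajorant_le hp0 hK hσ (zero_le_one.trans (le_max_left _ _)) hC0 (ht0 k)
      (by linarith [ht2 k]) (abs_nonneg _) (hB x) (by positivity)
  have hpt : ∀ x, Tendsto (fun k => supConvMajorant p K σ L C (t k) |f x| (‖fderiv ℝ f x‖ + δ k))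
      atTop (nhds (if |f x| = 0 then 0 else min (|f x| ^ p * (-p * log |f x| +
        K * (p * ‖fderiv ℝ f x‖ / |f x|) ^ p)) C)) := fun x =>
    tendsto_supConvMajorant hp0 hσ ht0 ht (by simpa using hδ.const_add ‖fderiv ℝ f x‖)
  have hlim := tendsto_integral_of_dominated_convergence (μ := (monMeasure A).restrict U)
    (fun _ => L ^ p + C + p * B ^ p * B)
    (fun k => (measurable_supConvMajorant (by fun_prop) (by fun_prop)).aestronglyMeasurable)
    (integrableOn_const hUc.measure_lt_top.ne) (fun k => Eventually.of_forall (hdom k))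
    (Eventually.of_forall hpt)
  have hEi : Integrable (fun x => -(|f x| ^ p * log (|f x| ^ p))) (monMeasure A) :=
    (integrable_abs_rpow_mul_log hA hp0 hfc hsupp).neg
  have hGi := (integrable_norm_rpow hA hp0 hgc hgs).const_mul (K * p ^ p)
  have hWi : IntegrableOn (fun x => if |f x| = 0 then 0 else min (|f x| ^ p * (-p * log |f x| +
      K * (p * ‖fderiv ℝ f x‖ / |f x|) ^ p)) C) U (monMeasure A) := by
    refine Measure.integrableOn_of_bounded (M := L ^ p + C + p * B ^ p * B) hUc.measure_lt_top.ne
      (Measurable.ite ?_ measurable_const (by fun_prop)).aestronglyMeasurable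
      (Eventually.of_forall fun x => le_of_tendsto' (hpt x).norm fun k => hdom k x)
    exact (measurableSet_singleton (0 : ℝ)).preimage (by fun_prop : Measurable fun x => |f x|)
  refine (ge_of_tendsto' hlim hbound).trans ?_
  have hout : ∀ x ∉ U, -(|f x| ^ p * log (|f x| ^ p)) + K * p ^ p * ‖fderiv ℝ f x‖ ^ p = 0 := by
    intro x hx
    rw [hU, mem_closedBall_zero_iff, not_le] at hx
    rw [hρf x (by linarith), hρg x (by linarith)]
    simp [hp0.ne']
  rw [← integral_neg, ← integral_const_mul, ← integral_add hEi hGi,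
    ← setIntegral_eq_integral_of_forall_compl_eq_zero hout]
  exact setIntegral_mono hWi (hEi.add hGi).integrableOn fun x =>
    ite_min_le_neg_mul_log hK hp0 (abs_nonneg _) (norm_nonneg _)

theorem monMeasure_ball_one (hA : ∀ i, 0 ≤ A i) (hD : 0 < monDim A) :
    monMeasure A (Metric.ball 0 1) = ENNReal.ofReal
      ((∏ i, Gamma ((A i + 1) / 2)) / (2 ^ monK A * Gamma (1 + monDim A / 2))) := by
  have h := lintegral_exp_neg_norm_rpow_monMeasure (A := A) (q := 2) (by norm_num) hD
  have hG : 0 < Gamma (1 + monDim A / 2) := Real.Gamma_pos_of_pos (by positivity)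
  simp only [Real.rpow_two] at h
  rw [lintegral_gaussian_monMeasure hA] at h
  rw [← div_div, ENNReal.ofReal_div_of_pos hG, h, mul_comm, ENNReal.mul_div_cancel_right]
  · simpa using hG
  · exact ENNReal.ofReal_ne_top

theorem lintegral_exp_neg_mul_norm_rpow_monMeasure {q c : ℝ} (hq : 0 < q) (hc : 0 < c)
    (hD : 0 < monDim A) :
    ∫⁻ x, ENNReal.ofReal (exp (-(c * ‖x‖ ^ q))) ∂monMeasure A =
      ENNReal.ofReal (c ^ (-(monDim A / q)) * Gamma (1 + monDim A / q)) *
        monMeasure A (Metric.ball 0 1) := by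
  have hc' : 0 < c ^ q⁻¹ := Real.rpow_pos_of_pos hc _
  have h := lintegral_monMeasure_comp_smul (A := A)
    (φ := fun x => ENNReal.ofReal (exp (-‖x‖ ^ q))) (by fun_prop) hc'
  simp only [norm_smul, Real.norm_of_nonneg hc'.le, Real.mul_rpow hc'.le (norm_nonneg _),
    Real.rpow_inv_rpow hc.le hq.ne'] at h
  rw [h, lintegral_exp_neg_norm_rpow_monMeasure hq hD, ← mul_assoc,
    ENNReal.ofReal_mul (by positivity), ← Real.rpow_mul hc.le]
  congr 4
  field_simp

theorem exists_le_setLIntegral_closedBall {E : Type*} [NormedAddCommGroup E] [MeasurableSpace E]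
    [OpensMeasurableSpace E] {μ : Measure E} {φ : E → ℝ≥0∞} {z : ℝ≥0∞}
    (hz : z < ∫⁻ x, φ x ∂μ) :
    ∃ R : ℝ, 0 ≤ R ∧ z ≤ ∫⁻ x in Metric.closedBall 0 R, φ x ∂μ := by
  have h := setLIntegral_iUnion_of_directed φ (μ := μ)
    (s := fun k : ℕ => Metric.closedBall (0 : E) k)
    (Monotone.directed_le fun a b hab => Metric.closedBall_subset_closedBall (by exact_mod_cast hab))
  rw [Metric.iUnion_closedBall_nat, setLIntegral_univ] at h
  rw [h, lt_iSup_iff] at hz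
  obtain ⟨k, hk⟩ := hz
  exact ⟨k, k.cast_nonneg, hk.le⟩

theorem log_add_monDim_le (hA : ∀ i, 0 ≤ A i) {p : ℝ} (hp : 1 < p)
    {f : EuclideanSpace ℝ (Fin n) → ℝ} (hf : ContDiff ℝ 1 f) (hsupp : HasCompactSupport f)
    {q c K Z : ℝ} (hc : 0 ≤ c) (hK : 0 ≤ K)
    (hY : ∀ x r : ℝ, 0 ≤ x → 0 ≤ r → x * r ≤ c * r ^ q + K * x ^ p)
    (hnorm : ∫ x, |f x| ^ p ∂monMeasure A = 1) (hZ0 : 0 < Z)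
    (hZ : ENNReal.ofReal Z = ∫⁻ x, ENNReal.ofReal (exp (-(c * ‖x‖ ^ q))) ∂monMeasure A) :
    log Z + monDim A ≤ -(∫ x, |f x| ^ p * log (|f x| ^ p) ∂monMeasure A) +
      K * p ^ p * ∫ x, ‖fderiv ℝ f x‖ ^ p ∂monMeasure A := by
  rw [← le_sub_iff_add_le]
  by_contra! h
  rw [Real.lt_log_iff_exp_lt hZ0] at h
  obtain ⟨z, hz, hzZ⟩ := exists_between h
  have hz0 : 0 < z := (exp_pos _).trans hz
  obtain ⟨R, hR, hzR⟩ := exists_le_setLIntegral_closedBall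
    (((ENNReal.ofReal_lt_ofReal_iff hZ0).mpr hzZ).trans_eq hZ)
  have h1 := log_add_monDim_le_of_le_setLIntegral hA hp hf hsupp hR hc hK hY hnorm hz0 hzR
  rw [← Real.lt_log_iff_exp_lt hz0] at hz
  linarith

theorem log_monC1 (hA : ∀ i, 0 ≤ A i) (hD : 0 < monDim A) :
    log (monC1 A) = -log (monDim A) - log ((∏ i, Gamma ((A i + 1) / 2)) /
      (2 ^ monK A * Gamma (1 + monDim A / 2))) / monDim A := by
  have h1 : 0 < ∏ i, Gamma ((A i + 1) / 2) :=
    Finset.prod_pos fun i _ => Real.Gamma_pos_of_pos (by have := hA i; positivity)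
  have hG : 0 < Gamma (1 + monDim A / 2) := Real.Gamma_pos_of_pos (by positivity)
  rw [monC1, Real.log_mul (by positivity) (by positivity), Real.log_inv, Real.log_rpow (by positivity),
    Real.log_div (by positivity) (by positivity), Real.log_div (by positivity) (by positivity)]
  ring

theorem log_monCp (hA : ∀ i, 0 ≤ A i) {p : ℝ} (hp : 1 < p) (hpD : p < monDim A) {V : ℝ}
    (hV : log (monC1 A) = - log (monDim A) - log V / monDim A) {q : ℝ} (hq : q = p / (p - 1)) :
    0 < monCp A p ∧ monDim A * log (monCp A p) = -log V +
      (monDim A - monDim A / p - 1) * log (monDim A) - monDim A * log (monDim A) +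
      monDim A / q * (log (p - 1) - log (monDim A - p)) + log q + log (Gamma (monDim A)) -
      log (Gamma (monDim A / p)) - log (Gamma (monDim A / q)) := by
  have hp0 : 0 < p := by linarith
  have hp1 : 0 < p - 1 := by linarith
  have hD : 0 < monDim A := by linarith
  have hDp : 0 < monDim A - p := by linarith
  have hq0 : 0 < q := by rw [hq]; positivity
  have hC1 : 0 < monC1 A := by
    have h1 : 0 < ∏ i, Gamma ((A i + 1) / 2) :=
      Finset.prod_pos fun i _ => Real.Gamma_pos_of_pos (by have := hA i; positivity)
    have hG : 0 < Gamma (1 + monDim A / 2) := Real.Gamma_pos_of_pos (by positivity)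
    unfold monC1; positivity
  have g1 : 0 < Gamma (monDim A) := Real.Gamma_pos_of_pos hD
  have g2 : 0 < Gamma (monDim A / p) := Real.Gamma_pos_of_pos (by positivity)
  have g3 : 0 < Gamma (monDim A / q) := Real.Gamma_pos_of_pos (by positivity)
  rw [monCp, ← hq]
  refine ⟨by positivity, ?_⟩
  rw [Real.log_mul (by positivity) (by positivity), Real.log_mul (by positivity) (by positivity),
    Real.log_mul (by positivity) (by positivity), Real.log_rpow (by positivity),
    Real.log_rpow (by positivity), Real.log_rpow (by positivity), Real.log_div (by positivity)
    (by positivity), Real.log_div (by positivity) (by positivity),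
    Real.log_mul (by positivity) (by positivity), Real.log_mul (by positivity) (by positivity), hV]
  field_simp
  ring

/-- The one-parameter family of logarithmic Sobolev inequalities before optimization. -/
theorem integral_mul_log_le_of_scale (hA : ∀ i, 0 ≤ A i) {p q V : ℝ} (hp : 1 < p)
    (hq : q = p / (p - 1)) (hD : 0 < monDim A) (hV0 : 0 < V)
    (hV : monMeasure A (Metric.ball 0 1) = ENNReal.ofReal V)
    {f : EuclideanSpace ℝ (Fin n) → ℝ} (hf : ContDiff ℝ 1 f) (hsupp : HasCompactSupport f)
    (hnorm : ∫ x, |f x| ^ p ∂monMeasure A = 1) (m : ℝ) :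
    ∫ x, |f x| ^ p * log (|f x| ^ p) ∂monMeasure A ≤
      monDim A * m - monDim A / q * log q - log (Gamma (1 + monDim A / q)) - log V - monDim A +
        exp (-(p * m)) * p ^ p / p * ∫ x, ‖fderiv ℝ f x‖ ^ p ∂monMeasure A := by
  have hp1 : 0 < p - 1 := by linarith
  have hq0 : 0 < q := by rw [hq]; positivity
  have hμ := exp_pos m
  have hc : 0 < exp m ^ q / q := by positivity
  have hG : 0 < Gamma (1 + monDim A / q) := Real.Gamma_pos_of_pos (by positivity)
  have h := log_add_monDim_le hA hp hf hsupp (q := q) (K := exp m ^ (-p) / p)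
    (Z := (exp m ^ q / q) ^ (-(monDim A / q)) * Gamma (1 + monDim A / q) * V) hc.le
    (by positivity) (fun x r hx hr => by rw [hq]; exact young_of_conjExponent hp hμ hx hr) hnorm
    (by positivity)
    (by rw [lintegral_exp_neg_mul_norm_rpow_monMeasure hq0 hc hD, hV, ENNReal.ofReal_mul
          (by positivity)])
  rw [Real.log_mul (by positivity) hV0.ne', Real.log_mul (by positivity) hG.ne',
    Real.log_rpow hc, Real.log_div (by positivity) hq0.ne', Real.log_rpow hμ, Real.log_exp,
    ← Real.exp_mul, mul_neg, mul_comm m p] at h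
  have e : -(monDim A / q) * (q * m - log q) = -(monDim A * m) + monDim A / q * log q := by
    field_simp; ring
  rw [e] at h
  have e2 : exp (-(p * m)) / p * p ^ p = exp (-(p * m)) * p ^ p / p := by ring
  rw [e2] at h
  linarith

theorem integral_mul_log_le_log_monCp (hA : ∀ i, 0 ≤ A i) {p : ℝ} (hp : 1 < p)
    (hpD : p < monDim A)
    {f : EuclideanSpace ℝ (Fin n) → ℝ} (hf : ContDiff ℝ 1 f) (hsupp : HasCompactSupport f)
    (hnorm : ∫ x, |f x| ^ p ∂monMeasure A = 1) :
    ∫ x, |f x| ^ p * log (|f x| ^ p) ∂monMeasure A ≤ monDim A / p *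
      log (monCp A p ^ p * ∫ x, ‖fderiv ℝ f x‖ ^ p ∂monMeasure A) := by
  have hp0 : 0 < p := by linarith
  have hp1 : 0 < p - 1 := by linarith
  have hD : 0 < monDim A := by linarith
  have hDp : 0 < monDim A - p := by linarith
  obtain ⟨q, hq⟩ : ∃ q, q = p / (p - 1) := ⟨_, rfl⟩
  have hq0 : 0 < q := by rw [hq]; positivity
  obtain ⟨V, hVdef⟩ : ∃ V, V = (∏ i, Gamma ((A i + 1) / 2)) /
    (2 ^ monK A * Gamma (1 + monDim A / 2)) := ⟨_, rfl⟩
  have hV0 : 0 < V := by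
    have h1 : 0 < ∏ i, Gamma ((A i + 1) / 2) :=
      Finset.prod_pos fun i _ => Real.Gamma_pos_of_pos (by have := hA i; positivity)
    have hG : 0 < Gamma (1 + monDim A / 2) := Real.Gamma_pos_of_pos (by positivity)
    rw [hVdef]; positivity
  have hscale := integral_mul_log_le_of_scale hA hp hq hD hV0
    (hVdef ▸ monMeasure_ball_one hA hD) hf hsupp hnorm
  obtain ⟨hC, hlogC⟩ := log_monCp hA hp hpD (V := V) (hVdef ▸ log_monC1 hA hD) hq
  have hI : 0 ≤ ∫ x, ‖fderiv ℝ f x‖ ^ p ∂monMeasure A :=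
    integral_nonneg fun x => by positivity
  set E := ∫ x, |f x| ^ p * log (|f x| ^ p) ∂monMeasure A
  set I := ∫ x, ‖fderiv ℝ f x‖ ^ p ∂monMeasure A
  set D := monDim A
  rcases hI.eq_or_lt with hI | hI
  · have h := hscale ((E + D / q * log q + log (Gamma (1 + D / q)) + log V + D - 1) / D)
    rw [← hI, mul_zero, mul_div_cancel₀ _ hD.ne'] at h
    linarith
  · have h := hscale (log p + (log I - log D) / p)
    have e1 : exp (-(p * (log p + (log I - log D) / p))) * p ^ p / p * I = D / p := by
      have : -(p * (log p + (log I - log D) / p)) = log D - log I - log p * p := by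
        field_simp; ring
      rw [this, Real.exp_sub, Real.exp_sub, Real.exp_log hD, Real.exp_log hI,
        ← Real.rpow_def_of_pos hp0]
      field_simp
    have hΓ : log (Gamma (1 + D / q)) = log D - log q + log (Gamma (D / q)) := by
      rw [add_comm, Real.Gamma_add_one (by positivity), Real.log_mul (by positivity)
        (Real.Gamma_pos_of_pos (by positivity)).ne', Real.log_div hD.ne' hq0.ne']
    have hlogq : log q = log p - log (p - 1) := by rw [hq, Real.log_div hp0.ne' hp1.ne']
    have hDq : D / q = D - D / p := by rw [hq]; field_simp
    have hk := log_Gamma_mul_lower_bound (a := D / p) ((one_lt_div hp0).mpr hpD) hp.le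
    have hsub : log (D / p - 1) = log (D - p) - log p := by
      rw [← Real.log_div hDp.ne' hp0.ne', sub_div, div_self hp0.ne']
    have hm : D / p * (p - 1) = D - D / p := by field_simp
    rw [div_mul_cancel₀ _ hp0.ne', hm, hsub] at hk
    rw [e1, hΓ] at h
    rw [Real.log_mul (by positivity) hI.ne', Real.log_rpow hC]
    have e2 : D / p * (p * log (monCp A p) + log I) = D * log (monCp A p) + D / p * log I := by
      field_simp
    have e3 : D * (log p + (log I - log D) / p) = D * log p + D / p * log I - D / p * log D := by
      field_simp; ring
    rw [e2, hlogC]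
    rw [e3] at h
    simp only [hDq, hlogq] at h ⊢
    nlinarith

end

/-- the `L^p` logarithmic Sobolev inequality with monomial weights.
(Recall `Real.log 0 = 0`, so `|f|^p log |f|^p` vanishes where `f = 0`.) -/
theorem Lp_logSobolev_monomial_weight {n : ℕ} (A : Fin n → ℝ) (hA : ∀ i, 0 ≤ A i)
    (p : ℝ) (hp1 : 1 < p) (hpD : p < monDim A)
    (f : EuclideanSpace ℝ (Fin n) → ℝ) (hf : ContDiff ℝ 1 f) (hsupp : HasCompactSupport f)
    (hnorm : ∫ x in monSet A, |f x| ^ p * monWeight A x = 1) :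
    ∫ x in monSet A, |f x| ^ p * log (|f x| ^ p) * monWeight A x ≤
      monDim A / p *
        log (monCp A p ^ p * ∫ x in monSet A, ‖fderiv ℝ f x‖ ^ p * monWeight A x) := by
  rw [← integral_monMeasure fun x => |f x| ^ p] at hnorm
  rw [← integral_monMeasure fun x => |f x| ^ p * log (|f x| ^ p),
    ← integral_monMeasure fun x => ‖fderiv ℝ f x‖ ^ p]
  exact integral_mul_log_le_log_monCp hA hp1 hpD hf hsupp hnorm
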